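/- arXiv:1206.0268 — 4 statements merged into one kernel-verified Lean document; each statement's English description precedes it below -/
import Mathlib

section
/- Let c ∈ (0,1), δ > 0, and let Ψ_δ : ℝ → ℝ be continuously differentiable with bounded derivative. A function R ∈ W^{2,∞}(ℝ) solves the travelling wave equation c²R''(x) = Δ₁(R − Ψ'_δ ∘ R)(x) for almost every x ∈ ℝ if and only if there exists a constant μ ∈ ℝ such that M R = A²(Ψ'_δ ∘ R) + μ holds (almost) everywhere on ℝ. -/
/-!
The averaging operator turns differentiation into a centred difference: `(A F)' = ∇F`, where
`∇F(x) = F(x + 1/2) - F(x - 1/2)`, and `∇∇ = Δ₁`. Hence, with `P = Ψ'_δ ∘ R`, the function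
`w = M R - A² P` satisfies `w'' = Δ₁(R - P) - c² R''` almost everywhere, and the travelling wave
equation says `w'' = 0`. Since `w'` is locally absolutely continuous, `w` is then affine, and being
bounded it is constant; its value is `μ`.
-/

open MeasureTheory Real Filter Topology

/-- The averaging operator `(A F)(x) = ∫_{x-1/2}^{x+1/2} F(s) ds`. -/
noncomputable def Aop (F : ℝ → ℝ) : ℝ → ℝ := fun x => ∫ s in (x - 1/2)..(x + 1/2), F s

/-- The operator `M F = A(A F) - c² F`. -/
noncomputable def Mop (c : ℝ) (F : ℝ → ℝ) : ℝ → ℝ := fun x => Aop (Aop F) x - c ^ 2 * F x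

/-- The discrete Laplacian `Δ₁ F(x) = F(x+1) - 2 F(x) + F(x-1)`. -/
def Delta1 (F : ℝ → ℝ) : ℝ → ℝ := fun x => F (x + 1) - 2 * F x + F (x - 1)

/-- Membership in `W^{2,∞}(ℝ)`: bounded, differentiable with bounded derivative,
and the derivative is Lipschitz (so the second derivative exists a.e. and is bounded). -/
def IsW2inf (S : ℝ → ℝ) : Prop :=
  Differentiable ℝ S ∧ (∃ C : ℝ, ∀ x, |S x| ≤ C ∧ |deriv S x| ≤ C) ∧
    ∃ K : NNReal, LipschitzWith K (deriv S)

section LocallyAbsolutelyContinuous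

variable {E : Type*} [NormedAddCommGroup E] [NormedSpace ℝ E]

lemma eq_of_ae_hasDerivAt_zero {f : ℝ → E} (hf : ∀ a b, AbsolutelyContinuousOnInterval f a b)
    (hf₀ : ∀ᵐ x, HasDerivAt f 0 x) (x y : ℝ) : f x = f y := by
  obtain ⟨k, hk⟩ := (hf x y).const_of_ae_hasDerivAt_zero (hf₀.mono fun _ h _ => h)
  rw [hk x Set.left_mem_uIcc, hk y Set.right_mem_uIcc]

lemma ae_differentiableAt_of_forall_absolutelyContinuousOnInterval {f : ℝ → ℝ}
    (hf : ∀ a b, AbsolutelyContinuousOnInterval f a b) : ∀ᵐ x, DifferentiableAt ℝ f x := by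
  have hbv : LocallyBoundedVariationOn f Set.univ := fun a b _ _ =>
    (hf a b).boundedVariationOn.mono (Set.inter_subset_right.trans Set.Icc_subset_uIcc)
  exact hbv.ae_differentiableAt

lemma eq_zero_of_forall_hasDerivAt_of_bounded {f : ℝ → E} {a : E} (hf : ∀ x, HasDerivAt f a x)
    (hbdd : ∃ C, ∀ x, ‖f x‖ ≤ C) : a = 0 := by
  obtain ⟨C, hC⟩ := hbdd
  have hlin : ∀ x, HasDerivAt (fun y => f y - y • a) 0 x := fun x => by
    simpa using (hf x).fun_sub ((hasDerivAt_id x).smul_const a)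
  have haff (x : ℝ) : f x - f 0 = x • a := by
    have := is_const_of_deriv_eq_zero (fun y => (hlin y).differentiableAt)
      (fun y => (hlin y).deriv) x 0
    rw [zero_smul, sub_zero] at this
    rw [← this, sub_sub_cancel]
  have hgrowth (x : ℝ) : x * ‖a‖ ≤ 2 * C :=
    calc x * ‖a‖ ≤ ‖x • a‖ := by rw [norm_smul]; gcongr; exact le_abs_self x
      _ = ‖f x - f 0‖ := by rw [haff]
      _ ≤ ‖f x‖ + ‖f 0‖ := norm_sub_le _ _
      _ ≤ 2 * C := by linarith [hC x, hC 0]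
  by_contra ha
  have := hgrowth ((2 * C + 1) / ‖a‖)
  rw [div_mul_cancel₀ _ (norm_ne_zero_iff.2 ha)] at this
  linarith

lemma ae_hasDerivAt_deriv_zero_iff_exists_const {f f' : ℝ → E} (hf : ∀ x, HasDerivAt f (f' x) x)
    (hf' : ∀ a b, AbsolutelyContinuousOnInterval f' a b) (hbdd : ∃ C, ∀ x, ‖f x‖ ≤ C) :
    (∀ᵐ x, HasDerivAt f' 0 x) ↔ ∃ k, ∀ x, f x = k := by
  constructor
  · intro h
    have hslope : ∀ x, HasDerivAt f (f' 0) x := fun x =>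
      eq_of_ae_hasDerivAt_zero hf' h x 0 ▸ hf x
    have hslope_zero : f' 0 = 0 := eq_zero_of_forall_hasDerivAt_of_bounded hslope hbdd
    rw [hslope_zero] at hslope
    exact ⟨f 0, fun x => is_const_of_deriv_eq_zero (fun y => (hslope y).differentiableAt)
      (fun y => (hslope y).deriv) x 0⟩
  · rintro ⟨k, hk⟩
    obtain rfl : f = fun _ => k := funext hk
    obtain rfl : f' = fun _ => 0 := funext fun x => (hf x).unique (hasDerivAt_const x k)
    exact .of_forall fun x => hasDerivAt_const x 0

end LocallyAbsolutelyContinuous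

/-- The centred difference `∇F(x) = F(x + 1/2) - F(x - 1/2)`. It is the derivative of `A F`, and
its square is the discrete Laplacian. -/
noncomputable def centralDiff (F : ℝ → ℝ) : ℝ → ℝ := fun x => F (x + 1 / 2) - F (x - 1 / 2)

lemma centralDiff_centralDiff (F : ℝ → ℝ) : centralDiff (centralDiff F) = Delta1 F := by
  funext x
  simp only [centralDiff, Delta1]
  ring_nf

lemma delta1_sub (F G : ℝ → ℝ) (x : ℝ) :
    Delta1 (fun y => F y - G y) x = Delta1 F x - Delta1 G x := by
  simp only [Delta1]
  ring

lemma hasDerivAt_centralDiff {F F' : ℝ → ℝ} (hF : ∀ x, HasDerivAt F (F' x) x) (x : ℝ) :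
    HasDerivAt (centralDiff F) (centralDiff F' x) x :=
  ((hF (x + 1 / 2)).comp_add_const x (1 / 2)).sub ((hF (x - 1 / 2)).comp_sub_const x (1 / 2))

lemma contDiff_centralDiff {n : WithTop ℕ∞} {F : ℝ → ℝ} (hF : ContDiff ℝ n F) :
    ContDiff ℝ n (centralDiff F) := by
  unfold centralDiff
  fun_prop

section Averaging

variable {F : ℝ → ℝ}

lemma hasDerivAt_aop (hF : Continuous F) (x : ℝ) : HasDerivAt (Aop F) (centralDiff F x) x := by
  have hprim : ∀ y, HasDerivAt (fun u => ∫ s in (0 : ℝ)..u, F s) (F y) y := fun y =>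
    (hF.integral_hasStrictDerivAt 0 y).hasDerivAt
  have hA : Aop F = centralDiff fun u => ∫ s in (0 : ℝ)..u, F s := by
    funext y
    exact (intervalIntegral.integral_interval_sub_left (hF.intervalIntegrable _ _)
      (hF.intervalIntegrable _ _)).symm
  exact hA ▸ hasDerivAt_centralDiff hprim x

lemma contDiff_one_aop (hF : Continuous F) : ContDiff ℝ 1 (Aop F) := by
  have hderiv : deriv (Aop F) = centralDiff F := funext fun x => (hasDerivAt_aop hF x).deriv
  rw [contDiff_one_iff_deriv, hderiv]
  exact ⟨fun x => (hasDerivAt_aop hF x).differentiableAt, by unfold centralDiff; fun_prop⟩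

lemma hasDerivAt_aop_aop (hF : Continuous F) (x : ℝ) :
    HasDerivAt (Aop (Aop F)) (centralDiff (Aop F) x) x :=
  hasDerivAt_aop (contDiff_one_aop hF).continuous x

lemma hasDerivAt_centralDiff_aop (hF : Continuous F) (x : ℝ) :
    HasDerivAt (centralDiff (Aop F)) (Delta1 F x) x :=
  centralDiff_centralDiff F ▸ hasDerivAt_centralDiff (hasDerivAt_aop hF) x

lemma absolutelyContinuousOnInterval_centralDiff_aop (hF : Continuous F) (a b : ℝ) :
    AbsolutelyContinuousOnInterval (centralDiff (Aop F)) a b :=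
  (contDiff_centralDiff (contDiff_one_aop hF)).contDiffOn.absolutelyContinuousOnInterval

lemma abs_aop_le {C : ℝ} (hC : ∀ x, |F x| ≤ C) (x : ℝ) : |Aop F x| ≤ C := by
  have hlength : |x + 1 / 2 - (x - 1 / 2)| = 1 := by norm_num
  calc |Aop F x| ≤ C * |x + 1 / 2 - (x - 1 / 2)| :=
        intervalIntegral.norm_integral_le_of_norm_le_const (f := F) fun y _ => hC y
    _ = C := by rw [hlength, mul_one]

lemma abs_mop_le {C : ℝ} (c : ℝ) (hC : ∀ x, |F x| ≤ C) (x : ℝ) :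
    |Mop c F x| ≤ (1 + c ^ 2) * C :=
  calc |Mop c F x| ≤ |Aop (Aop F) x| + |c ^ 2 * F x| := abs_sub _ _
    _ = |Aop (Aop F) x| + c ^ 2 * |F x| := by rw [abs_mul, abs_of_nonneg (sq_nonneg c)]
    _ ≤ C + c ^ 2 * C := by gcongr; exacts [abs_aop_le (abs_aop_le hC) x, hC x]
    _ = (1 + c ^ 2) * C := by ring

lemma hasDerivAt_mop (c : ℝ) (hF : Differentiable ℝ F) (x : ℝ) :
    HasDerivAt (Mop c F) (centralDiff (Aop F) x - c ^ 2 * deriv F x) x :=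
  (hasDerivAt_aop_aop hF.continuous x).sub ((hF x).hasDerivAt.const_mul (c ^ 2))

end Averaging

theorem stmt0_general (c : ℝ) {R P : ℝ → ℝ} (hR : Differentiable ℝ R)
    (hR' : ∀ a b, AbsolutelyContinuousOnInterval (deriv R) a b) (hRbdd : ∃ C, ∀ x, |R x| ≤ C)
    (hP : Continuous P) (hPbdd : ∃ B, ∀ x, |P x| ≤ B) :
    (∀ᵐ x ∂(volume : Measure ℝ), DifferentiableAt ℝ (deriv R) x ∧
        c ^ 2 * deriv (deriv R) x = Delta1 (fun y => R y - P y) x) ↔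
      ∃ μ : ℝ, ∀ x, Mop c R x = Aop (Aop P) x + μ := by
  obtain ⟨C, hC⟩ := hRbdd
  obtain ⟨B, hB⟩ := hPbdd
  let w' : ℝ → ℝ := fun x =>
    centralDiff (Aop R) x - c ^ 2 * deriv R x - centralDiff (Aop P) x
  have hw : ∀ x, HasDerivAt (fun y => Mop c R y - Aop (Aop P) y) (w' x) x := fun x =>
    (hasDerivAt_mop c hR x).sub (hasDerivAt_aop_aop hP x)
  have hw' : ∀ a b, AbsolutelyContinuousOnInterval w' a b := fun a b =>
    ((absolutelyContinuousOnInterval_centralDiff_aop hR.continuous a b).fun_sub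
      ((hR' a b).const_mul (c ^ 2))).fun_sub
        (absolutelyContinuousOnInterval_centralDiff_aop hP a b)
  have hbdd : ∀ x, ‖Mop c R x - Aop (Aop P) x‖ ≤ (1 + c ^ 2) * C + B := fun x =>
    (norm_sub_le _ _).trans (add_le_add (abs_mop_le c hC x) (abs_aop_le (abs_aop_le hB) x))
  have hwave : ∀ᵐ x, (DifferentiableAt ℝ (deriv R) x ∧
      c ^ 2 * deriv (deriv R) x = Delta1 (fun y => R y - P y) x) ↔ HasDerivAt w' 0 x := by
    filter_upwards [ae_differentiableAt_of_forall_absolutelyContinuousOnInterval hR'] with x hx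
    have hw'' : HasDerivAt w' (Delta1 (fun y => R y - P y) x - c ^ 2 * deriv (deriv R) x) x := by
      rw [delta1_sub, sub_right_comm]
      exact ((hasDerivAt_centralDiff_aop hR.continuous x).sub
        (hx.hasDerivAt.const_mul (c ^ 2))).sub (hasDerivAt_centralDiff_aop hP x)
    rw [and_iff_right hx, eq_comm, ← sub_eq_zero]
    exact ⟨fun h => h ▸ hw'', hw''.unique⟩
  rw [eventually_congr hwave, ae_hasDerivAt_deriv_zero_iff_exists_const hw hw' ⟨_, hbdd⟩]
  simp only [sub_eq_iff_eq_add']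

/-- a function `R ∈ W^{2,∞}` solves the travelling wave equation
`c² R'' = Δ₁ (R - Ψ'_δ ∘ R)` almost everywhere if and only if there is a constant `μ`
with `M R = A² (Ψ'_δ ∘ R) + μ` everywhere. -/
theorem stmt0 (c δ : ℝ) (hc0 : 0 < c) (hc1 : c < 1) (hδ : 0 < δ)
    (Ψδ Ψd : ℝ → ℝ) (hderiv : ∀ r, HasDerivAt Ψδ (Ψd r) r)
    (hcont : Continuous Ψd) (hbd : ∃ B : ℝ, ∀ r, |Ψd r| ≤ B)
    (R : ℝ → ℝ) (hR : IsW2inf R) :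
    (∀ᵐ x ∂(volume : Measure ℝ), DifferentiableAt ℝ (deriv R) x ∧
        c ^ 2 * deriv (deriv R) x = Delta1 (fun y => R y - Ψd (R y)) x) ↔
      ∃ μ : ℝ, ∀ x, Mop c R x = Aop (Aop (fun y => Ψd (R y))) x + μ := by
  obtain ⟨hd, ⟨C, hC⟩, K, hK⟩ := hR
  exact stmt0_general c hd (fun _ _ => hK.lipschitzOnWith.absolutelyContinuousOnInterval)
    ⟨C, fun x => (hC x).1⟩ (hcont.comp hd.continuous) (hbd.imp fun _ hB x => hB (R x))
end

section
/- Let c ∈ (0,1) and let F ∈ L^∞(ℝ) satisfy (A²F)(x) = c²F(x) for almost every x ∈ ℝ. Then there exist finitely many positive real numbers k₁ < … < k_n with a(k_i)² = c² for each i, and real coefficients α_i, β_i, such that F(x) = Σ_{i=1}^n (α_i cos(k_i x) + β_i sin(k_i x)) for almost every x ∈ ℝ. In other words, every bounded kernel function of M = A² − c² is a finite linear combination of the harmonics cos(k·), sin(k·) over the positive real roots k of m(k) = a(k)² − c². -/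
open MeasureTheory Real Filter Topology

/-- The symbol `a(k) = sin(k/2)/(k/2)`, with `a(0) = 1`. -/
noncomputable def symb (k : ℝ) : ℝ := if k = 0 then 1 else Real.sin (k / 2) / (k / 2)

open scoped BoundedContinuousFunction FourierTransform

/-!
Replacing `F` by `c⁻² A (A F)`, one may assume that `F` is bounded and continuous. Consider its
Carleman transform, given by `∫ exp (-s x) F x` over `(0, ∞)` for `0 < Re s` and by minus the
integral over `(-∞, 0)` for `Re s < 0`. Modulo entire functions, averaging acts on it as
multiplication by `sinh (s / 2) / (s / 2)`, whose value at `i k` is the symbol `a(k)`. Hence the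
transform of a kernel function extends meromorphically to the plane, with poles only at the finitely
many points `i k` with `a(k)² = c²`. The bound `‖F‖ / |Re s|` makes these poles simple, and a
Liouville argument shows that the transform is the sum of its polar parts, which is the transform of
a combination of the waves `exp (i k x)`. Since the transform is injective, `F` is that combination.
-/

section ExponentialIntegral

open ProbabilityTheory

variable {Ω E : Type*} {mΩ : MeasurableSpace Ω} [NormedAddCommGroup E] [NormedSpace ℂ E]
  {X : Ω → ℝ} {μ : Measure Ω} {z : ℂ} {u : Ω → E} {B : ℝ}

lemma hasDerivAt_integral_cexp_smul (hz : z.re ∈ interior (integrableExpSet X μ))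
    (hu : AEStronglyMeasurable u μ) (hB : ∀ᵐ ω ∂μ, ‖u ω‖ ≤ B) :
    HasDerivAt (fun w ↦ ∫ ω, Complex.exp (w * X ω) • u ω ∂μ)
      (∫ ω, ((X ω : ℂ) * Complex.exp (z * X ω)) • u ω ∂μ) z := by
  have hX : AEMeasurable X μ := aemeasurable_of_mem_interior_integrableExpSet hz
  obtain ⟨l, r, hlr, h_subset⟩ :=
    mem_nhds_iff_exists_Ioo_subset.1 (mem_interior_iff_mem_nhds.1 hz)
  let t := ((z.re - l) ⊓ (r - z.re)) / 2
  have ht : 0 < t := half_pos (by simp [hlr.1, hlr.2])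
  have norm_exp_le (ω : Ω) (w : ℂ) (hw : w ∈ Metric.ball z (t / 2)) :
      ‖Complex.exp (w * X ω)‖ ≤ rexp (z.re * X ω + t / 2 * |X ω|) := by
    have h : |(w - z).re| ≤ t / 2 :=
      (Complex.abs_re_le_norm _).trans (mem_ball_iff_norm.1 hw).le
    rw [Complex.norm_exp, Complex.re_mul_ofReal]
    gcongr
    calc w.re * X ω = z.re * X ω + (w - z).re * X ω := by rw [Complex.sub_re]; ring
      _ ≤ z.re * X ω + |(w - z).re| * |X ω| := by
        rw [← abs_mul]
        gcongr
        exact le_abs_self _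
      _ ≤ z.re * X ω + t / 2 * |X ω| := by gcongr
  refine (hasDerivAt_integral_of_dominated_loc_of_deriv_le
    (F := fun w ω ↦ Complex.exp (w * X ω) • u ω)
    (F' := fun w ω ↦ ((X ω : ℂ) * Complex.exp (w * X ω)) • u ω)
    (bound := fun ω ↦ |X ω| ^ 1 * rexp (z.re * X ω + t / 2 * |X ω|) * B)
    (Metric.ball_mem_nhds z (half_pos ht)) (.of_forall fun w ↦ ?_) ?_ ?_ ?_ ?_ ?_).2
  · exact AEStronglyMeasurable.smul (by fun_prop) hu
  · exact (integrable_cexp_mul_of_re_mem_interior_integrableExpSet hz).smul_bdd B hu hB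
  · exact AEStronglyMeasurable.smul (by fun_prop) hu
  · filter_upwards [hB] with ω hω w hw
    rw [norm_smul, norm_mul, Complex.norm_real, Real.norm_eq_abs, pow_one]
    gcongr
    exact norm_exp_le ω w hw
  · refine (integrable_pow_abs_mul_exp_add_of_integrable_exp_mul (t := t) ?_ ?_ ?_ ?_ 1).mul_const B
    · exact h_subset (add_half_inf_sub_mem_Ioo hlr)
    · exact h_subset (sub_half_inf_sub_mem_Ioo hlr)
    · positivity
    · exact (half_lt_self ht).trans_le (le_abs_self t)
  · refine ae_of_all _ fun ω w _ ↦ HasDerivAt.smul_const ?_ (u ω)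
    simpa only [mul_comm] using (hasDerivAt_mul_const (X ω : ℂ)).cexp

end ExponentialIntegral

section Shift

variable {E : Type*} [NormedAddCommGroup E]

/-- The translate `x ↦ u (x + h)` of a bounded continuous function. -/
def shift (h : ℝ) (u : ℝ →ᵇ E) : ℝ →ᵇ E :=
  u.compContinuous ⟨(· + h), by fun_prop⟩

/-- The reflection `x ↦ u (-x)` of a bounded continuous function. -/
def reflect (u : ℝ →ᵇ E) : ℝ →ᵇ E :=
  u.compContinuous ⟨(-·), by fun_prop⟩

lemma norm_reflect_le (u : ℝ →ᵇ E) : ‖reflect u‖ ≤ ‖u‖ :=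
  (BoundedContinuousFunction.norm_le (norm_nonneg u)).2 fun _ ↦ u.norm_coe_le_norm _

end Shift

section CarlemanTransform

open Set ProbabilityTheory

variable {E : Type*} [NormedAddCommGroup E] [NormedSpace ℂ E] {s : ℂ}

/-- The one-sided Laplace transform; meaningful for `0 < s.re`. -/
noncomputable def laplaceTransform (u : ℝ →ᵇ E) (s : ℂ) : E :=
  ∫ x in Ioi (0 : ℝ), Complex.exp (-s * x) • u x

lemma integrableOn_cexp_smul_Ioi (u : ℝ →ᵇ E) (hs : 0 < s.re) (a : ℝ) :
    IntegrableOn (fun x : ℝ ↦ Complex.exp (-s * x) • u x) (Ioi a) :=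
  (integrableOn_exp_mul_complex_Ioi (by simpa) a).smul_bdd ‖u‖
    u.continuous.aestronglyMeasurable (ae_of_all _ u.norm_coe_le_norm)

lemma norm_laplaceTransform_mul_re_le (u : ℝ →ᵇ E) (hs : 0 < s.re) :
    ‖laplaceTransform u s‖ * s.re ≤ ‖u‖ := by
  have hint : IntegrableOn (fun x ↦ rexp (-s.re * x)) (Ioi 0) :=
    integrableOn_exp_mul_Ioi (neg_lt_zero.2 hs) 0
  rw [← le_div_iff₀ hs]
  calc ‖laplaceTransform u s‖ ≤ ∫ x in Ioi (0 : ℝ), rexp (-s.re * x) * ‖u‖ := by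
        refine norm_integral_le_of_norm_le (hint.mul_const _) (ae_of_all _ fun x ↦ ?_)
        rw [norm_smul, Complex.norm_exp, Complex.re_mul_ofReal, Complex.neg_re]
        gcongr
        exact u.norm_coe_le_norm x
    _ = ‖u‖ / s.re := by
        rw [integral_mul_const, integral_exp_mul_Ioi (neg_lt_zero.2 hs)]
        simp [div_eq_inv_mul]

lemma isLinearMap_laplaceTransform (hs : 0 < s.re) :
    IsLinearMap ℂ fun u : ℝ →ᵇ E ↦ laplaceTransform u s where
  map_add u v := by
    simp only [laplaceTransform, BoundedContinuousFunction.add_apply, smul_add]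
    exact integral_add (integrableOn_cexp_smul_Ioi u hs 0) (integrableOn_cexp_smul_Ioi v hs 0)
  map_smul a u := by
    simp only [laplaceTransform, BoundedContinuousFunction.smul_apply, smul_comm _ a]
    exact integral_smul a _

lemma differentiableAt_laplaceTransform (u : ℝ →ᵇ E) (hs : 0 < s.re) :
    DifferentiableAt ℂ (laplaceTransform u) s := by
  have hneg : (-s).re ∈ interior (integrableExpSet id (volume.restrict (Ioi 0))) := by
    refine mem_interior.2 ⟨Iio 0, fun t ht ↦ ?_, isOpen_Iio, by simpa using hs⟩
    exact integrableOn_exp_mul_Ioi ht 0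
  exact (hasDerivAt_integral_cexp_smul hneg u.continuous.aestronglyMeasurable
    (ae_of_all _ u.norm_coe_le_norm)).differentiableAt.comp s differentiableAt_id.neg

lemma laplaceTransform_shift (u : ℝ →ᵇ E) (hs : 0 < s.re) (h : ℝ) :
    laplaceTransform (shift h u) s =
      Complex.exp (s * h) •
        (laplaceTransform u s - ∫ x in (0 : ℝ)..h, Complex.exp (-s * x) • u x) := by
  have hsplit : laplaceTransform u s - ∫ x in (0 : ℝ)..h, Complex.exp (-s * x) • u x =
      ∫ x in Ioi h, Complex.exp (-s * x) • u x :=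
    sub_eq_iff_eq_add'.2 (intervalIntegral.integral_interval_add_Ioi
      (integrableOn_cexp_smul_Ioi u hs 0) (integrableOn_cexp_smul_Ioi u hs h)).symm
  rw [hsplit, ← integral_smul, ← (measurePreserving_add_right volume h).setIntegral_preimage_emb
    (measurableEmbedding_addRight h), preimage_add_const_Ioi, sub_self]
  refine setIntegral_congr_fun measurableSet_Ioi fun x _ ↦ ?_
  simp only [shift, BoundedContinuousFunction.compContinuous_apply, ContinuousMap.coe_mk, smul_smul,
    ← Complex.exp_add, Complex.ofReal_add]
  ring_nf

lemma laplaceTransform_of_hasDerivAt [CompleteSpace E] {u v : ℝ →ᵇ E}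
    (huv : ∀ x, HasDerivAt u (v x) x) (hs : 0 < s.re) :
    laplaceTransform v s = s • laplaceTransform u s - u 0 := by
  let f (x : ℝ) : E := Complex.exp (-s * x) • u x
  have hderiv (x : ℝ) :
      HasDerivAt f (Complex.exp (-s * x) • v x - s • Complex.exp (-s * x) • u x) x := by
    convert! ((Complex.ofRealCLM.hasDerivAt (x := x)).const_mul (-s)).cexp.smul (huv x) using 1
    simp [smul_smul, mul_comm s, sub_eq_add_neg]
  have hv := integrableOn_cexp_smul_Ioi v hs 0
  have hu := integrableOn_cexp_smul_Ioi u hs 0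
  have hsu : IntegrableOn (fun x : ℝ ↦ s • Complex.exp (-s * x) • u x) (Ioi 0) := hu.smul s
  have hlim : Tendsto f atTop (𝓝 0) :=
    tendsto_zero_of_hasDerivAt_of_integrableOn_Ioi (fun x _ ↦ hderiv x) (hv.sub hsu) hu
  have hFTC := integral_Ioi_of_hasDerivAt_of_tendsto' (fun x _ ↦ hderiv x) (hv.sub hsu) hlim
  rw [integral_sub hv hsu, integral_smul] at hFTC
  rw [laplaceTransform, laplaceTransform, sub_eq_iff_eq_add.1 hFTC]
  simp [f, sub_eq_neg_add]

/-- The Carleman transform: the Laplace transform of `u` over the positive half-line for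
`0 < s.re`, and minus the Laplace transform over the negative half-line for `s.re < 0`. The value
on the imaginary axis is meaningless. -/
noncomputable def carlemanTransform (u : ℝ →ᵇ E) (s : ℂ) : E :=
  if 0 < s.re then laplaceTransform u s else -laplaceTransform (reflect u) (-s)

lemma carlemanTransform_of_re_pos (u : ℝ →ᵇ E) (hs : 0 < s.re) :
    carlemanTransform u s = laplaceTransform u s :=
  if_pos hs

lemma carlemanTransform_of_re_neg (u : ℝ →ᵇ E) (hs : s.re < 0) :
    carlemanTransform u s = -laplaceTransform (reflect u) (-s) :=
  if_neg hs.not_gt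

lemma norm_carlemanTransform_mul_abs_re_le (u : ℝ →ᵇ E) (hs : s.re ≠ 0) :
    ‖carlemanTransform u s‖ * |s.re| ≤ ‖u‖ := by
  rcases hs.lt_or_gt with hneg | hpos
  · rw [carlemanTransform_of_re_neg u hneg, norm_neg, abs_of_neg hneg, ← Complex.neg_re]
    exact (norm_laplaceTransform_mul_re_le (reflect u) (by simpa)).trans (norm_reflect_le u)
  · rw [carlemanTransform_of_re_pos u hpos, abs_of_pos hpos]
    exact norm_laplaceTransform_mul_re_le u hpos

lemma isLinearMap_carlemanTransform (hs : s.re ≠ 0) :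
    IsLinearMap ℂ fun u : ℝ →ᵇ E ↦ carlemanTransform u s := by
  rcases hs.lt_or_gt with hneg | hpos
  · have hL : IsLinearMap ℂ fun u : ℝ →ᵇ E ↦ laplaceTransform u (-s) :=
      isLinearMap_laplaceTransform (by simpa)
    simp only [carlemanTransform_of_re_neg _ hneg]
    exact ⟨fun u v ↦ (congrArg _ (hL.map_add (reflect u) (reflect v))).trans (neg_add _ _),
      fun a u ↦ (congrArg _ (hL.map_smul a (reflect u))).trans (smul_neg _ _).symm⟩
  · simpa only [carlemanTransform_of_re_pos _ hpos] using isLinearMap_laplaceTransform hpos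

lemma differentiableAt_carlemanTransform (u : ℝ →ᵇ E) (hs : s.re ≠ 0) :
    DifferentiableAt ℂ (carlemanTransform u) s := by
  rcases hs.lt_or_gt with hneg | hpos
  · have hL : DifferentiableAt ℂ (laplaceTransform (reflect u)) (-s) :=
      differentiableAt_laplaceTransform (reflect u) (by simpa)
    refine (hL.comp s differentiableAt_id.neg).neg.congr_of_eventuallyEq ?_
    filter_upwards [Complex.continuous_re.continuousAt.eventually_lt_const hneg] with w hw
    exact carlemanTransform_of_re_neg u hw
  · refine (differentiableAt_laplaceTransform u hpos).congr_of_eventuallyEq ?_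
    filter_upwards [Complex.continuous_re.continuousAt.eventually_const_lt hpos] with w hw
    exact carlemanTransform_of_re_pos u hw

lemma carlemanTransform_shift (u : ℝ →ᵇ E) (hs : s.re ≠ 0) (h : ℝ) :
    carlemanTransform (shift h u) s =
      Complex.exp (s * h) •
        (carlemanTransform u s - ∫ x in (0 : ℝ)..h, Complex.exp (-s * x) • u x) := by
  rcases hs.lt_or_gt with hneg | hpos
  · have hreflect : reflect (shift h u) = shift (-h) (reflect u) := by
      ext x
      simp [reflect, shift, add_comm]
    have hint : ∫ x in (0 : ℝ)..-h, Complex.exp (- -s * x) • reflect u x =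
        -∫ x in (0 : ℝ)..h, Complex.exp (-s * x) • u x := by
      rw [← intervalIntegral.integral_symm, ← neg_zero,
        ← intervalIntegral.integral_comp_neg]
      simp [reflect]
    rw [carlemanTransform_of_re_neg _ hneg, carlemanTransform_of_re_neg _ hneg, hreflect,
      laplaceTransform_shift _ (by simpa), hint, ← smul_neg]
    simp [sub_eq_neg_add, add_comm]
  · simpa only [carlemanTransform_of_re_pos _ hpos] using laplaceTransform_shift u hpos h

variable [CompleteSpace E]

lemma carlemanTransform_of_hasDerivAt {u v : ℝ →ᵇ E}
    (huv : ∀ x, HasDerivAt u (v x) x) (hs : s.re ≠ 0) :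
    carlemanTransform v s = s • carlemanTransform u s - u 0 := by
  rcases hs.lt_or_gt with hneg | hpos
  · have hderiv (x : ℝ) : HasDerivAt (reflect u) (reflect (-v) x) x := by
      simpa [reflect] using HasDerivAt.scomp x (huv (-x)) (hasDerivAt_neg x)
    have hlap := laplaceTransform_of_hasDerivAt hderiv (s := -s) (by simpa)
    have hlin : laplaceTransform (reflect (-v)) (-s) = -laplaceTransform (reflect v) (-s) :=
      (isLinearMap_laplaceTransform (by simpa)).map_neg (reflect v)
    rw [carlemanTransform_of_re_neg _ hneg, carlemanTransform_of_re_neg _ hneg, ← hlin, hlap]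
    simp [reflect]
  · simpa only [carlemanTransform_of_re_pos _ hpos] using laplaceTransform_of_hasDerivAt huv hpos

end CarlemanTransform

section Injectivity

open Set

variable {E : Type*} [NormedAddCommGroup E] [NormedSpace ℂ E] {s : ℂ}

/-- The plane wave `x ↦ exp (i k x) • a`. -/
noncomputable def planeWave (k : ℝ) (a : E) : ℝ →ᵇ E :=
  .ofNormedAddCommGroup (fun x : ℝ ↦ Complex.exp (k * Complex.I * x) • a) (by fun_prop) ‖a‖
    fun x ↦ by simp [norm_smul, Complex.norm_exp]

lemma integrable_exp_neg_abs : Integrable fun x : ℝ ↦ rexp (-|x|) :=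
  .of_integral_ne_zero (by
    rw [integral_comp_abs (f := fun x ↦ rexp (-x)), integral_exp_neg_Ioi_zero]
    norm_num)

lemma integrable_exp_neg_abs_smul (u : ℝ →ᵇ E) :
    Integrable fun x : ℝ ↦ (rexp (-|x|) : ℂ) • u x :=
  integrable_exp_neg_abs.ofReal.smul_bdd ‖u‖ u.continuous.aestronglyMeasurable
    (ae_of_all _ u.norm_coe_le_norm)

lemma fourier_exp_neg_abs_smul (u : ℝ →ᵇ E) (ξ : ℝ) :
    𝓕 (fun x : ℝ ↦ (rexp (-|x|) : ℂ) • u x) ξ =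
      carlemanTransform u (1 + 2 * π * ξ * Complex.I) -
        carlemanTransform u (-1 + 2 * π * ξ * Complex.I) := by
  let g (x : ℝ) : E := Complex.exp (↑(-2 * π * x * ξ) * Complex.I) • (rexp (-|x|) : ℂ) • u x
  have hg : Integrable g :=
    (integrable_exp_neg_abs_smul u).bdd_smul 1 (by fun_prop)
      (ae_of_all _ fun x ↦ (Complex.norm_exp_ofReal_mul_I _).le)
  have hpos : carlemanTransform u (1 + 2 * π * ξ * Complex.I) = ∫ x in Ioi 0, g x := by
    rw [carlemanTransform_of_re_pos u (by simp)]
    refine setIntegral_congr_fun measurableSet_Ioi fun x hx ↦ ?_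
    simp only [g, smul_smul, abs_of_pos (mem_Ioi.1 hx), Complex.ofReal_exp, ← Complex.exp_add]
    push_cast
    ring_nf
  have hneg : carlemanTransform u (-1 + 2 * π * ξ * Complex.I) = -∫ x in Iic 0, g x := by
    rw [carlemanTransform_of_re_neg u (by simp), ← neg_zero, ← integral_comp_neg_Ioi]
    refine congrArg _ (setIntegral_congr_fun measurableSet_Ioi fun x hx ↦ ?_)
    simp only [g, reflect, BoundedContinuousFunction.compContinuous_apply, ContinuousMap.coe_mk,
      smul_smul, abs_neg, abs_of_pos (mem_Ioi.1 hx), Complex.ofReal_exp, ← Complex.exp_add]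
    push_cast
    ring_nf
  rw [Real.fourier_real_eq_integral_exp_smul, hpos, hneg, sub_neg_eq_add, add_comm,
    intervalIntegral.integral_Iic_add_Ioi hg.integrableOn hg.integrableOn]

variable [CompleteSpace E]

lemma carlemanTransform_planeWave (hs : s.re ≠ 0) (k : ℝ) (a : E) :
    carlemanTransform (planeWave k a) s = (s - k * Complex.I)⁻¹ • a := by
  have hderiv (x : ℝ) :
      HasDerivAt (planeWave k a) (((k * Complex.I) • planeWave k a : ℝ →ᵇ E) x) x := by
    convert! (((Complex.ofRealCLM.hasDerivAt (x := x)).const_mul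
      (k * Complex.I)).cexp.smul_const a) using 1
    simp [planeWave, smul_smul, mul_comm]
  have hne : s - k * Complex.I ≠ 0 := fun h ↦ hs (by simp [sub_eq_zero.1 h])
  have htransform := carlemanTransform_of_hasDerivAt hderiv hs
  rw [(isLinearMap_carlemanTransform hs).map_smul, eq_sub_iff_add_eq,
    ← eq_sub_iff_add_eq', ← sub_smul] at htransform
  rw [eq_inv_smul_iff₀ hne, ← htransform]
  simp [planeWave]

lemma eq_zero_of_carlemanTransform_eq_zero {u : ℝ →ᵇ E}
    (h : ∀ s : ℂ, s.re ≠ 0 → carlemanTransform u s = 0) : u = 0 := by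
  let v (x : ℝ) : E := (rexp (-|x|) : ℂ) • u x
  have hfourier : 𝓕 v = 0 := by
    ext ξ
    rw [fourier_exp_neg_abs_smul, h _ (by simp), h _ (by simp), sub_zero, Pi.zero_apply]
  have hint : Integrable v := integrable_exp_neg_abs_smul u
  ext x
  have hinv : 𝓕⁻ (𝓕 v) x = v x :=
    hint.fourierInv_fourier_eq (by simp [hfourier])
      (by fun_prop : Continuous v).continuousAt
  have hv : v x = 0 := by rw [← hinv, hfourier, Real.fourierInv_eq']; simp
  exact (smul_eq_zero.1 hv).resolve_left (by simp)

end Injectivity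

section PartialFractions

open Set

variable {E : Type*} [NormedAddCommGroup E] [NormedSpace ℂ E]

lemma norm_sq_add_norm_sq (z : ℂ) : ‖z ^ 2 + (‖z‖ : ℂ) ^ 2‖ = 2 * |z.re| * ‖z‖ := by
  have h : z ^ 2 + (‖z‖ : ℂ) ^ 2 = ((2 * z.re : ℝ) : ℂ) * z := by
    rw [← Complex.mul_conj', ← Complex.add_conj]
    ring
  rw [h, norm_mul, Complex.norm_real, Real.norm_eq_abs, abs_mul, abs_two]

-- On the circle `‖z‖ = R` the factor `z ^ 2 + R ^ 2` is small exactly where `|z.re|⁻¹` is large.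
lemma norm_mul_le_of_norm_mul_abs_re_le {H : ℂ → E} (hH : Differentiable ℂ H) {C R : ℝ}
    (hb : ∀ s, ‖H s‖ * |s.re| ≤ C) {s : ℂ} (hR : ‖s‖ < R) :
    (R ^ 2 - ‖s‖ ^ 2) * ‖H s‖ ≤ 2 * C * R := by
  have hR0 : 0 < R := (norm_nonneg s).trans_lt hR
  have hmax : ‖(s ^ 2 + (R : ℂ) ^ 2) • H s‖ ≤ 2 * C * R := by
    refine Complex.norm_le_of_forall_mem_frontier_norm_le (U := Metric.ball (0 : ℂ) R)
      (f := fun z ↦ (z ^ 2 + (R : ℂ) ^ 2) • H z) Metric.isBounded_ball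
      (Differentiable.diffContOnCl (by fun_prop)) (fun z hz ↦ ?_)
      (subset_closure (mem_ball_zero_iff.2 hR))
    obtain rfl : ‖z‖ = R := by simpa [frontier_ball _ hR0.ne'] using hz
    calc ‖(z ^ 2 + (‖z‖ : ℂ) ^ 2) • H z‖ = 2 * (‖H z‖ * |z.re|) * ‖z‖ := by
          rw [norm_smul, norm_sq_add_norm_sq]; ring
      _ ≤ 2 * C * ‖z‖ := by gcongr; exact hb z
  have hnorm : R ^ 2 - ‖s‖ ^ 2 ≤ ‖s ^ 2 + (R : ℂ) ^ 2‖ := by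
    calc R ^ 2 - ‖s‖ ^ 2 = ‖(R : ℂ) ^ 2‖ - ‖s ^ 2‖ := by simp
      _ ≤ ‖s ^ 2 + (R : ℂ) ^ 2‖ := by
        rw [add_comm]
        exact norm_sub_le_norm_add _ _
  calc (R ^ 2 - ‖s‖ ^ 2) * ‖H s‖ ≤ ‖s ^ 2 + (R : ℂ) ^ 2‖ * ‖H s‖ := by gcongr
    _ ≤ 2 * C * R := by rwa [← norm_smul]

lemma eq_zero_of_norm_mul_abs_re_le {H : ℂ → E} (hH : Differentiable ℂ H) {C : ℝ}
    (hb : ∀ s, ‖H s‖ * |s.re| ≤ C) (s : ℂ) : H s = 0 := by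
  have hinv : Tendsto (fun R : ℝ ↦ R⁻¹) atTop (𝓝 0) := tendsto_inv_atTop_zero
  have hleft : Tendsto (fun R : ℝ ↦ (1 - (‖s‖ * R⁻¹) ^ 2) * ‖H s‖) atTop (𝓝 ‖H s‖) := by
    simpa using (((hinv.const_mul ‖s‖).pow 2).const_sub 1).mul_const ‖H s‖
  have hright : Tendsto (fun R : ℝ ↦ 2 * C * R⁻¹) atTop (𝓝 0) := by
    simpa using hinv.const_mul (2 * C)
  refine norm_le_zero_iff.1 (le_of_tendsto_of_tendsto hleft hright ?_)
  filter_upwards [eventually_gt_atTop ‖s‖] with R hR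
  have hR0 : 0 < R := (norm_nonneg s).trans_lt hR
  calc (1 - (‖s‖ * R⁻¹) ^ 2) * ‖H s‖ = (R ^ 2 - ‖s‖ ^ 2) * ‖H s‖ / R ^ 2 := by field_simp
    _ ≤ 2 * C * R / R ^ 2 := by gcongr ?_ / _; exact norm_mul_le_of_norm_mul_abs_re_le hH hb hR
    _ = 2 * C * R⁻¹ := by field_simp

lemma exists_tendsto_sub_smul_of_norm_mul_abs_re_le {f : ℂ → E} {p : ℂ}
    (hf : MeromorphicAt f p) (hp : p.re = 0) {C : ℝ} (hb : ∀ s, s.re ≠ 0 → ‖f s‖ * |s.re| ≤ C) :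
    ∃ a, Tendsto (fun s ↦ (s - p) • f s) (𝓝[≠] p) (𝓝 a) := by
  have hmer : MeromorphicAt (fun s ↦ (s - p) • f s) p := by fun_prop
  rw [tendsto_nhds_iff_meromorphicOrderAt_nonneg hmer]
  by_contra! hneg
  have hpath : Tendsto (fun t : ℝ ↦ p + t) (𝓝[>] 0) (𝓝[≠] p) := by
    refine tendsto_nhdsWithin_iff.2 ⟨?_, ?_⟩
    · have hcont : Continuous fun t : ℝ ↦ p + t := by fun_prop
      simpa using (hcont.tendsto 0).mono_left nhdsWithin_le_nhds
    · filter_upwards [self_mem_nhdsWithin] with t ht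
      simpa using (mem_Ioi.1 ht).ne'
  have htop := tendsto_norm_cobounded_atTop.comp
    (((tendsto_cobounded_iff_meromorphicOrderAt_neg hmer).2 hneg).comp hpath)
  obtain ⟨t, ht, ht0⟩ := ((htop.eventually_gt_atTop C).and self_mem_nhdsWithin).exists
  have hbound := hb (p + t) (by simpa [hp] using (mem_Ioi.1 ht0).ne')
  refine ht.not_ge ?_
  simpa [norm_smul, hp, mul_comm] using hbound

lemma exists_differentiable_of_tendsto_sub_smul {f : ℂ → E}
    (hf : MeromorphicOn f univ)
    (hlim : ∀ p, Tendsto (fun s ↦ (s - p) • f s) (𝓝[≠] p) (𝓝 0)) :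
    ∃ H : ℂ → E, Differentiable ℂ H ∧ ∀ p, AnalyticAt ℂ f p → H p = f p := by
  refine ⟨toMeromorphicNFOn f univ, fun p ↦ AnalyticAt.differentiableAt ?_, fun p hp ↦ ?_⟩
  · have hsub : meromorphicOrderAt (fun s ↦ (s - p)) p = 1 := meromorphicOrderAt_id_sub_const
    have hid : MeromorphicAt (fun s ↦ s - p) p := by fun_prop
    have hprod : 0 < 1 + meromorphicOrderAt f p := by
      rw [← hsub, ← meromorphicOrderAt_smul hid (hf p (mem_univ p)),
        ← tendsto_zero_iff_meromorphicOrderAt_pos (hid.smul (hf p (mem_univ p)))]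
      exact hlim p
    rw [← MeromorphicNFAt.meromorphicOrderAt_nonneg_iff_analyticAt
      (meromorphicNFOn_toMeromorphicNFOn f univ (mem_univ p)),
      meromorphicOrderAt_toMeromorphicNFOn hf (mem_univ p)]
    cases h : meromorphicOrderAt f p with
    | top => exact le_top
    | coe n =>
      rw [h] at hprod
      norm_cast at hprod ⊢
      lia
  · rw [toMeromorphicNFOn_eq_toMeromorphicNFAt hf (mem_univ p),
      toMeromorphicNFAt_eq_self.2 hp.meromorphicNFAt]

/-- The sum of the polar parts `a k / (s - i k)`, `k ∈ K`. -/
noncomputable def simplePoles (K : Finset ℝ) (a : ℝ → E) (s : ℂ) : E :=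
  ∑ k ∈ K, (s - k * Complex.I)⁻¹ • a k

lemma analyticAt_simplePoles {K : Finset ℝ} (a : ℝ → E) {p : ℂ}
    (hp : ∀ k ∈ K, p ≠ k * Complex.I) : AnalyticAt ℂ (simplePoles K a) p := by
  refine Finset.analyticAt_fun_sum K fun k hk ↦ ?_
  exact ((analyticAt_id.sub analyticAt_const).inv (sub_ne_zero.2 (hp k hk))).smul analyticAt_const

lemma meromorphicOn_simplePoles (K : Finset ℝ) (a : ℝ → E) :
    MeromorphicOn (simplePoles K a) univ := by
  intro p _
  unfold simplePoles
  fun_prop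

lemma tendsto_sub_smul_simplePoles (K : Finset ℝ) (a : ℝ → E) (p : ℂ) :
    Tendsto (fun s ↦ (s - p) • simplePoles K a s) (𝓝[≠] p)
      (𝓝 (∑ k ∈ K, if p = k * Complex.I then a k else 0)) := by
  simp only [simplePoles, Finset.smul_sum]
  refine tendsto_finsetSum K fun k _ ↦ ?_
  split_ifs with h
  · refine tendsto_const_nhds.congr' ?_
    filter_upwards [self_mem_nhdsWithin] with s hs
    rw [h, smul_inv_smul₀ (sub_ne_zero.2 (h ▸ hs))]
  · have hcont : ContinuousAt (fun s ↦ (s - p) • (s - k * Complex.I)⁻¹ • a k) p := by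
      fun_prop (disch := exact sub_ne_zero.2 h)
    simpa using hcont.tendsto.mono_left nhdsWithin_le_nhds

lemma norm_simplePoles_mul_abs_re_le (K : Finset ℝ) (a : ℝ → E) (s : ℂ) :
    ‖simplePoles K a s‖ * |s.re| ≤ ∑ k ∈ K, ‖a k‖ := by
  rw [simplePoles]
  refine (mul_le_mul_of_nonneg_right (norm_sum_le _ _) (abs_nonneg _)).trans ?_
  rw [Finset.sum_mul]
  refine Finset.sum_le_sum fun k _ ↦ ?_
  have hre : |s.re| ≤ ‖s - k * Complex.I‖ := by
    simpa using Complex.abs_re_le_norm (s - k * Complex.I)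
  calc ‖(s - k * Complex.I)⁻¹ • a k‖ * |s.re|
      ≤ ‖(s - k * Complex.I)⁻¹ • a k‖ * ‖s - k * Complex.I‖ := by gcongr
    _ = ‖s - k * Complex.I‖⁻¹ * ‖s - k * Complex.I‖ * ‖a k‖ := by
      rw [norm_smul, norm_inv]; ring
    _ ≤ ‖a k‖ := mul_le_of_le_one_left (norm_nonneg _) inv_mul_le_one

variable {f : ℂ → E} {K : Finset ℝ} {C : ℝ}

lemma exists_tendsto_sub_smul_sub_simplePoles (hf : MeromorphicOn f univ)
    (hK : ∀ p, (∀ k ∈ K, p ≠ k * Complex.I) → AnalyticAt ℂ f p)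
    (hb : ∀ s, s.re ≠ 0 → ‖f s‖ * |s.re| ≤ C) :
    ∃ a : ℝ → E, ∀ p, Tendsto (fun s ↦ (s - p) • (f s - simplePoles K a s)) (𝓝[≠] p) (𝓝 0) := by
  have hresidue (k : ℝ) :
      ∃ a, Tendsto (fun s ↦ (s - k * Complex.I) • f s) (𝓝[≠] (k * Complex.I)) (𝓝 a) :=
    exists_tendsto_sub_smul_of_norm_mul_abs_re_le (hf _ (mem_univ _)) (by simp) hb
  choose a ha using hresidue
  refine ⟨a, fun p ↦ ?_⟩
  suffices h : Tendsto (fun s ↦ (s - p) • f s) (𝓝[≠] p)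
      (𝓝 (∑ k ∈ K, if p = k * Complex.I then a k else 0)) by
    simpa only [smul_sub, sub_self] using h.sub (tendsto_sub_smul_simplePoles K a p)
  by_cases hp : ∃ k ∈ K, p = k * Complex.I
  · obtain ⟨k, hk, rfl⟩ := hp
    simpa [hk] using ha k
  · push Not at hp
    rw [Finset.sum_eq_zero fun k hk ↦ if_neg (hp k hk)]
    have hcont : ContinuousAt (fun s ↦ (s - p) • f s) p :=
      (by fun_prop : ContinuousAt (fun s ↦ s - p) p).smul (hK p hp).continuousAt
    simpa using hcont.tendsto.mono_left nhdsWithin_le_nhds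

lemma exists_eq_simplePoles (hf : MeromorphicOn f univ)
    (hK : ∀ p, (∀ k ∈ K, p ≠ k * Complex.I) → AnalyticAt ℂ f p)
    (hb : ∀ s, s.re ≠ 0 → ‖f s‖ * |s.re| ≤ C) :
    ∃ a : ℝ → E, ∀ s, s.re ≠ 0 → f s = simplePoles K a s := by
  obtain ⟨a, ha⟩ := exists_tendsto_sub_smul_sub_simplePoles hf hK hb
  obtain ⟨H, hH, hHf⟩ :=
    exists_differentiable_of_tendsto_sub_smul (hf.sub (meromorphicOn_simplePoles K a)) ha
  have hHf' (s : ℂ) (hs : s.re ≠ 0) : H s = f s - simplePoles K a s := by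
    have hne : ∀ k ∈ K, s ≠ k * Complex.I := fun k _ h ↦ hs (by simp [h])
    exact hHf s ((hK s hne).sub (analyticAt_simplePoles a hne))
  have hbound (s : ℂ) : ‖H s‖ * |s.re| ≤ C + ∑ k ∈ K, ‖a k‖ := by
    by_cases hs : s.re = 0
    · have hC : 0 ≤ C := (by positivity : 0 ≤ ‖f 1‖ * _).trans (hb 1 (by simp))
      rw [hs, abs_zero, mul_zero]
      positivity
    · calc ‖H s‖ * |s.re| ≤ (‖f s‖ + ‖simplePoles K a s‖) * |s.re| := by
            rw [hHf' s hs]; gcongr; exact norm_sub_le _ _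
        _ ≤ C + ∑ k ∈ K, ‖a k‖ := by
            rw [add_mul]
            exact add_le_add (hb s hs) (norm_simplePoles_mul_abs_re_le K a s)
  exact ⟨a, fun s hs ↦ sub_eq_zero.1
    ((hHf' s hs).symm.trans (eq_zero_of_norm_mul_abs_re_le hH hbound s))⟩

end PartialFractions

section DiscreteSpectrum

open Set

variable {E : Type*} [NormedAddCommGroup E] [NormedSpace ℂ E] [CompleteSpace E]
  {u : ℝ →ᵇ E} {D : ℂ → ℂ} {N : ℂ → E}

lemma analyticAt_carlemanTransform (u : ℝ →ᵇ E) {p : ℂ} (hp : p.re ≠ 0) :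
    AnalyticAt ℂ (carlemanTransform u) p := by
  rw [Complex.analyticAt_iff_eventually_differentiableAt]
  filter_upwards [Complex.continuous_re.continuousAt.eventually_ne hp] with s hs
  exact differentiableAt_carlemanTransform u hs

lemma eventually_ne_zero_of_finite_imaginary_zeros (hD : Differentiable ℂ D)
    (hfin : {k : ℝ | D (k * Complex.I) = 0}.Finite) (k : ℝ) :
    ∀ᶠ s in 𝓝[≠] (k * Complex.I), D s ≠ 0 := by
  refine (hD.analyticAt _).eventually_eq_zero_or_eventually_ne_zero.resolve_left fun hzero ↦ ?_
  have hcont : Continuous fun t : ℝ ↦ (t * Complex.I : ℂ) := by fun_prop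
  exact infinite_of_mem_nhds k ((hcont.tendsto k).eventually hzero) hfin

lemma exists_meromorphicOn_eq_carlemanTransform (hD : Differentiable ℂ D)
    (hN : Differentiable ℂ N) (hDN : ∀ s : ℂ, s.re ≠ 0 → D s • carlemanTransform u s = N s)
    (hfin : {k : ℝ | D (k * Complex.I) = 0}.Finite) :
    ∃ f : ℂ → E, MeromorphicOn f univ ∧ (∀ p, p.re ≠ 0 ∨ D p ≠ 0 → AnalyticAt ℂ f p) ∧
      ∀ s : ℂ, s.re ≠ 0 → f s = carlemanTransform u s := by
  let f (s : ℂ) : E := if s.re = 0 then (D s)⁻¹ • N s else carlemanTransform u s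
  have hf_off (s : ℂ) (hs : s.re ≠ 0) : f s = carlemanTransform u s := if_neg hs
  have hf_div (s : ℂ) (hs : D s ≠ 0) : (D s)⁻¹ • N s = f s := by
    by_cases h : s.re = 0
    · exact (if_pos h).symm
    · rw [hf_off s h, ← hDN s h, inv_smul_smul₀ hs]
  have hf_an (p : ℂ) (hp : p.re ≠ 0 ∨ D p ≠ 0) : AnalyticAt ℂ f p := by
    rcases hp with hp | hp
    · refine (analyticAt_carlemanTransform u hp).congr ?_
      filter_upwards [Complex.continuous_re.continuousAt.eventually_ne hp] with s hs
      exact (hf_off s hs).symm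
    · refine (((hD.analyticAt p).inv hp).smul (hN.analyticAt p)).congr ?_
      filter_upwards [hD.continuous.continuousAt.eventually_ne hp] with s hs
      exact hf_div s hs
  refine ⟨f, fun p _ ↦ ?_, hf_an, hf_off⟩
  by_cases hp : p.re = 0
  · obtain ⟨k, rfl⟩ : ∃ k : ℝ, p = k * Complex.I := ⟨p.im, Complex.ext (by simp [hp]) (by simp)⟩
    refine ((hD.analyticAt _).meromorphicAt.inv.smul (hN.analyticAt _).meromorphicAt).congr ?_
    filter_upwards [eventually_ne_zero_of_finite_imaginary_zeros hD hfin k] with s hs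
    exact hf_div s hs
  · exact (hf_an p (.inl hp)).meromorphicAt

lemma carlemanTransform_sum_planeWave (K : Finset ℝ) (a : ℝ → E) {s : ℂ} (hs : s.re ≠ 0) :
    carlemanTransform (∑ k ∈ K, planeWave k (a k)) s = simplePoles K a s := by
  have hsum := map_sum (isLinearMap_carlemanTransform hs).mk' (fun k ↦ planeWave k (a k)) K
  simp only [IsLinearMap.mk'_apply, carlemanTransform_planeWave hs] at hsum
  exact hsum

theorem exists_eq_sum_planeWave (hD : Differentiable ℂ D) (hN : Differentiable ℂ N)
    (hDN : ∀ s : ℂ, s.re ≠ 0 → D s • carlemanTransform u s = N s)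
    (hfin : {k : ℝ | D (k * Complex.I) = 0}.Finite) :
    ∃ a : ℝ → E, u = ∑ k ∈ hfin.toFinset, planeWave k (a k) := by
  obtain ⟨f, hf, hf_an, hf_eq⟩ := exists_meromorphicOn_eq_carlemanTransform hD hN hDN hfin
  have hpoles (p : ℂ) (hp : ∀ k ∈ hfin.toFinset, p ≠ k * Complex.I) : AnalyticAt ℂ f p := by
    refine hf_an p (or_iff_not_imp_left.2 fun hre hzero ↦ ?_)
    have him : p = p.im * Complex.I := Complex.ext (by simpa using hre) (by simp)
    exact hp p.im (by simpa [← him] using hzero) him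
  have hbound (s : ℂ) (hs : s.re ≠ 0) : ‖f s‖ * |s.re| ≤ ‖u‖ :=
    hf_eq s hs ▸ norm_carlemanTransform_mul_abs_re_le u hs
  obtain ⟨a, ha⟩ := exists_eq_simplePoles hf hpoles hbound
  refine ⟨a, sub_eq_zero.1 (eq_zero_of_carlemanTransform_eq_zero fun s hs ↦ ?_)⟩
  rw [(isLinearMap_carlemanTransform hs).map_sub, carlemanTransform_sum_planeWave _ a hs,
    ← ha s hs, hf_eq s hs, sub_self]

end DiscreteSpectrum

section Symbol

open Set

/-- The entire function `s ↦ sinh (s / 2) / (s / 2)`, which is the symbol of the averaging operator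
on the imaginary axis. -/
noncomputable def entireSymb : ℂ → ℂ :=
  dslope (fun s ↦ 2 * Complex.sinh (s / 2)) 0

lemma differentiable_dslope {E : Type*} [NormedAddCommGroup E] [NormedSpace ℂ E] [CompleteSpace E]
    {f : ℂ → E} (hf : Differentiable ℂ f) (p : ℂ) : Differentiable ℂ (dslope f p) :=
  differentiableOn_univ.1 ((Complex.differentiableOn_dslope univ_mem).2 hf.differentiableOn)

lemma differentiable_entireSymb : Differentiable ℂ entireSymb :=
  differentiable_dslope (by fun_prop) 0

lemma mul_entireSymb (s : ℂ) : s * entireSymb s = 2 * Complex.sinh (s / 2) := by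
  simpa [entireSymb] using sub_smul_dslope (fun s : ℂ ↦ 2 * Complex.sinh (s / 2)) 0 s

lemma mul_symb (k : ℝ) : k * symb k = 2 * Real.sin (k / 2) := by
  rcases eq_or_ne k 0 with rfl | hk
  · simp
  · rw [symb, if_neg hk]
    field_simp

lemma symb_neg (k : ℝ) : symb (-k) = symb k := by
  simp [symb, neg_div, div_neg]

lemma symb_abs (k : ℝ) : symb |k| = symb k := by
  rcases abs_choice k with h | h
  · rw [h]
  · rw [h, symb_neg]

lemma pos_of_symb_sq_lt_one {k : ℝ} (hk : 0 ≤ k) (h : symb k ^ 2 < 1) : 0 < k :=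
  hk.lt_of_ne' (by rintro rfl; simp [symb] at h)

lemma entireSymb_mul_I (k : ℝ) : entireSymb (k * Complex.I) = symb k := by
  rcases eq_or_ne k 0 with rfl | hk
  · have hderiv : HasDerivAt (fun s : ℂ ↦ 2 * Complex.sinh (s / 2)) 1 0 := by
      simpa using ((hasDerivAt_id (0 : ℂ)).div_const 2).csinh.const_mul 2
    simp [entireSymb, symb, hderiv.deriv]
  · have hkI : (k : ℂ) * Complex.I ≠ 0 := by simp [hk]
    refine mul_left_cancel₀ hkI ?_
    have hsymb : (k : ℂ) * symb k = 2 * Complex.sin (k / 2) := by exact_mod_cast mul_symb k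
    rw [mul_entireSymb, mul_right_comm, hsymb, mul_div_right_comm, Complex.sinh_mul_I,
      mul_assoc]

lemma abs_le_of_symb_sq_eq {c k : ℝ} (hc : c ≠ 0) (h : symb k ^ 2 = c ^ 2) : |k| ≤ 2 / |c| := by
  rw [le_div_iff₀ (abs_pos.2 hc), ← (sq_eq_sq_iff_abs_eq_abs _ _).1 h, ← abs_mul, mul_symb, abs_mul,
    abs_two]
  exact mul_le_of_le_one_right zero_le_two (abs_sin_le_one _)

lemma finite_symb_sq_eq {c : ℝ} (hc : c ≠ 0) : {k : ℝ | symb k ^ 2 = c ^ 2}.Finite := by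
  let D (s : ℂ) : ℂ := entireSymb s ^ 2 - c ^ 2
  have hD : Differentiable ℂ D := (differentiable_entireSymb.pow 2).sub_const _
  have hDk (k : ℝ) : D (k * Complex.I) = ↑(symb k ^ 2 - c ^ 2) := by
    simp [D, entireSymb_mul_I]
  have h2π : D ((2 * π : ℝ) * Complex.I) ≠ 0 := by
    rw [hDk, symb, if_neg (by positivity)]
    simp [hc]
  have hD_an : AnalyticOnNhd ℂ D univ := fun p _ ↦ hD.analyticAt p
  have hcodisc := hD_an.preimage_zero_mem_codiscrete h2π
  have hfin := (isCompact_closedBall (0 : ℂ) (2 / |c|)).finite_sdiff_of_mem_codiscreteWithin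
    (codiscreteWithin_mono (subset_univ _) hcodisc)
  have hinj : Function.Injective fun k : ℝ ↦ (k : ℂ) * Complex.I := fun k l h ↦ by simpa using h
  refine (hfin.preimage hinj.injOn).subset fun k hk ↦ ⟨?_, ?_⟩
  · simpa using abs_le_of_symb_sq_eq hc hk
  · exact not_not.2 ((hDk k).trans (by rw [sub_eq_zero.2 hk, Complex.ofReal_zero]))

end Symbol

section Averaging

variable {E : Type*} [NormedAddCommGroup E]

lemma continuous_integral_sub_add [NormedSpace ℝ E] {f : ℝ → E}
    (hint : ∀ a b, IntervalIntegrable f volume a b) (h : ℝ) :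
    Continuous fun x ↦ ∫ t in (x - h)..(x + h), f t := by
  have hprim := intervalIntegral.continuous_primitive hint 0
  have hsub : (fun x ↦ ∫ t in (x - h)..(x + h), f t) =
      fun x ↦ (∫ t in (0 : ℝ)..(x + h), f t) - ∫ t in (0 : ℝ)..(x - h), f t :=
    funext fun x ↦ (intervalIntegral.integral_interval_sub_left (hint 0 _) (hint 0 _)).symm
  rw [hsub]
  fun_prop

lemma norm_integral_unit_le [NormedSpace ℝ E] {f : ℝ → E} {B : ℝ} (hB : ∀ᵐ x, ‖f x‖ ≤ B) (x : ℝ) :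
    ‖∫ t in (x - 1 / 2)..(x + 1 / 2), f t‖ ≤ B := by
  have h := intervalIntegral.norm_integral_le_of_norm_le_const_ae (a := x - 1 / 2) (b := x + 1 / 2)
    (hB.mono fun y hy _ ↦ hy)
  rwa [show x + 1 / 2 - (x - 1 / 2) = 1 by ring, abs_one, mul_one] at h

variable [NormedSpace ℂ E]

/-- The averaging operator `u ↦ ∫ t in (x - 1 / 2)..(x + 1 / 2), u t` on bounded continuous
functions. -/
noncomputable def unitAverage (u : ℝ →ᵇ E) : ℝ →ᵇ E :=
  .ofNormedAddCommGroup (fun x ↦ ∫ t in (x - 1 / 2)..(x + 1 / 2), u t)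
    (continuous_integral_sub_add u.continuous.intervalIntegrable _) ‖u‖
    (norm_integral_unit_le (ae_of_all _ u.norm_coe_le_norm))

lemma differentiable_integral_cexp_smul (u : ℝ →ᵇ E) (h : ℝ) :
    Differentiable ℂ fun s : ℂ ↦ ∫ x in (0 : ℝ)..h, Complex.exp (-s * x) • u x := by
  have hdiff (s : ℂ) : DifferentiableAt ℂ
      (fun w ↦ ∫ x in Set.uIoc 0 h, Complex.exp (w * x) • u x) s := by
    have hexp : ProbabilityTheory.integrableExpSet id (volume.restrict (Set.uIoc 0 h)) = Set.univ :=
      Set.eq_univ_of_forall fun t ↦ Continuous.integrableOn_uIoc (by fun_prop)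
    have hs : s.re ∈ interior
        (ProbabilityTheory.integrableExpSet id (volume.restrict (Set.uIoc 0 h))) := by simp [hexp]
    exact (hasDerivAt_integral_cexp_smul hs u.continuous.aestronglyMeasurable
      (ae_of_all _ u.norm_coe_le_norm)).differentiableAt
  simp only [intervalIntegral.intervalIntegral_eq_integral_uIoc]
  exact fun s ↦ ((hdiff (-s)).comp s differentiableAt_id.neg).const_smul _

variable [CompleteSpace E]

lemma hasDerivAt_unitAverage (u : ℝ →ᵇ E) (x : ℝ) :
    HasDerivAt (unitAverage u) ((shift (1 / 2) u - shift (-(1 / 2)) u : ℝ →ᵇ E) x) x := by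
  have hint (a b : ℝ) : IntervalIntegrable u volume a b := u.continuous.intervalIntegrable a b
  have hprim (y : ℝ) : HasDerivAt (fun z ↦ ∫ t in (0 : ℝ)..z, u t) (u y) y :=
    (u.continuous.integral_hasStrictDerivAt 0 y).hasDerivAt
  have h := ((hprim _).comp_add_const x (1 / 2)).sub ((hprim _).comp_sub_const x (1 / 2))
  simp only [Pi.sub_def, intervalIntegral.integral_interval_sub_left (hint 0 _) (hint 0 _)] at h
  exact h

lemma exists_carlemanTransform_unitAverage (u : ℝ →ᵇ E) :
    ∃ N : ℂ → E, Differentiable ℂ N ∧ ∀ s : ℂ, s.re ≠ 0 →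
      carlemanTransform (unitAverage u) s = entireSymb s • carlemanTransform u s + N s := by
  let I (h : ℝ) (s : ℂ) : E := ∫ x in (0 : ℝ)..h, Complex.exp (-s * x) • u x
  let R (s : ℂ) : E :=
    unitAverage u 0 - Complex.exp (s / 2) • I (1 / 2) s + Complex.exp (-(s / 2)) • I (-(1 / 2)) s
  have hI (h : ℝ) : Differentiable ℂ (I h) := differentiable_integral_cexp_smul u h
  have hR : Differentiable ℂ R := by fun_prop
  have hR0 : R 0 = 0 := by
    have hint (b : ℝ) : IntervalIntegrable u volume 0 b := u.continuous.intervalIntegrable 0 b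
    have h := intervalIntegral.integral_interval_sub_left (hint 2⁻¹) (hint (-2⁻¹))
    simp [R, I, unitAverage, sub_add, h]
  refine ⟨dslope R 0, differentiable_dslope hR 0, fun s hs ↦ ?_⟩
  have hs0 : s ≠ 0 := by rintro rfl; simp at hs
  have hplus : s * ((1 / 2 : ℝ) : ℂ) = s / 2 := by push_cast; ring
  have hminus : s * ((-(1 / 2) : ℝ) : ℂ) = -(s / 2) := by push_cast; ring
  have hderiv := carlemanTransform_of_hasDerivAt (hasDerivAt_unitAverage u) hs
  rw [(isLinearMap_carlemanTransform hs).map_sub, carlemanTransform_shift u hs,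
    carlemanTransform_shift u hs, hplus, hminus, eq_sub_iff_add_eq] at hderiv
  have hRs : s • dslope R 0 s = R s := by simpa [hR0] using sub_smul_dslope R 0 s
  refine smul_right_injective E hs0 ?_
  simp only [smul_add, smul_smul, mul_entireSymb, hRs, Complex.sinh, ← hderiv, R, I]
  module

end Averaging

section Kernel

open Set

lemma exists_eq_sum_planeWave_of_unitAverage_unitAverage_eq {E : Type*} [NormedAddCommGroup E]
    [NormedSpace ℂ E] [CompleteSpace E] {c : ℝ} (hc : c ≠ 0) {u : ℝ →ᵇ E}
    (hu : unitAverage (unitAverage u) = (c ^ 2 : ℂ) • u) :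
    ∃ (K : Finset ℝ) (a : ℝ → E), (∀ k ∈ K, symb k ^ 2 = c ^ 2) ∧
      u = ∑ k ∈ K, planeWave k (a k) := by
  obtain ⟨N₁, hN₁, h₁⟩ := exists_carlemanTransform_unitAverage u
  obtain ⟨N₂, hN₂, h₂⟩ := exists_carlemanTransform_unitAverage (unitAverage u)
  have hzeros : {k : ℝ | entireSymb (k * Complex.I) ^ 2 - c ^ 2 = 0} =
      {k : ℝ | symb k ^ 2 = c ^ 2} := by
    ext k
    rw [mem_ofPred_eq, mem_ofPred_eq, entireSymb_mul_I, sub_eq_zero]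
    norm_cast
  have hfin := hzeros ▸ finite_symb_sq_eq hc
  have hentire := differentiable_entireSymb
  have hquot (s : ℂ) (hs : s.re ≠ 0) :
      (entireSymb s ^ 2 - c ^ 2) • carlemanTransform u s = -(entireSymb s • N₁ s + N₂ s) := by
    have hsymbol : (c ^ 2 : ℂ) • carlemanTransform u s =
        entireSymb s • (entireSymb s • carlemanTransform u s + N₁ s) + N₂ s := by
      rw [← h₁ s hs, ← h₂ s hs, hu, (isLinearMap_carlemanTransform hs).map_smul]
    rw [sub_smul, hsymbol]
    module
  obtain ⟨a, ha⟩ := exists_eq_sum_planeWave (D := fun s ↦ entireSymb s ^ 2 - c ^ 2)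
    (N := fun s ↦ -(entireSymb s • N₁ s + N₂ s)) (by fun_prop) (by fun_prop) hquot hfin
  exact ⟨_, a, fun k hk ↦ hzeros.subset (hfin.mem_toFinset.1 hk), ha⟩

end Kernel

section RealKernel

lemma exists_forall_eq_Aop {F : ℝ → ℝ} {B : ℝ} (hmeas : AEStronglyMeasurable F)
    (hB : ∀ᵐ x, |F x| ≤ B) : ∃ v : ℝ →ᵇ ℂ, ∀ x, v x = Aop F x := by
  have hint (a b : ℝ) : IntervalIntegrable F volume a b :=
    ⟨Measure.integrableOn_of_bounded (M := B) (by simp) hmeas (ae_restrict_of_ae hB),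
      Measure.integrableOn_of_bounded (M := B) (by simp) hmeas (ae_restrict_of_ae hB)⟩
  have hcont : Continuous (Aop F) := continuous_integral_sub_add hint (1 / 2)
  refine ⟨.ofNormedAddCommGroup (fun x ↦ (Aop F x : ℂ)) (by fun_prop) B fun x ↦ ?_, fun x ↦ rfl⟩
  rw [Complex.norm_real]
  exact norm_integral_unit_le hB x

lemma unitAverage_apply_of_ae_eq_ofReal {u : ℝ →ᵇ ℂ} {F : ℝ → ℝ} (hu : ∀ᵐ x, u x = F x) (x : ℝ) :
    unitAverage u x = Aop F x := by
  calc unitAverage u x = ∫ t in (x - 1 / 2)..(x + 1 / 2), (F t : ℂ) :=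
        intervalIntegral.integral_congr_ae (hu.mono fun t ht _ ↦ ht)
    _ = Aop F x := intervalIntegral.integral_ofReal

lemma exists_ae_eq_ofReal_unitAverage_unitAverage_eq {c : ℝ} (hc : c ≠ 0) {F : ℝ → ℝ}
    (hmeas : AEStronglyMeasurable F) (hbd : ∃ B : ℝ, ∀ᵐ x, |F x| ≤ B)
    (hker : ∀ᵐ x, Aop (Aop F) x = c ^ 2 * F x) :
    ∃ u : ℝ →ᵇ ℂ, (∀ᵐ x, u x = F x) ∧ unitAverage (unitAverage u) = (c ^ 2 : ℂ) • u := by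
  obtain ⟨B, hB⟩ := hbd
  obtain ⟨v, hv⟩ := exists_forall_eq_Aop hmeas hB
  have hc2 : (c ^ 2 : ℂ) ≠ 0 := by simp [hc]
  let u : ℝ →ᵇ ℂ := (c ^ 2 : ℂ)⁻¹ • unitAverage v
  have huF : ∀ᵐ x, u x = F x := by
    filter_upwards [hker] with x hx
    change (c ^ 2 : ℂ)⁻¹ • unitAverage v x = F x
    rw [unitAverage_apply_of_ae_eq_ofReal (ae_of_all _ hv), hx, inv_smul_eq_iff₀ hc2]
    simp
  have huv : unitAverage u = v := by
    ext x
    rw [unitAverage_apply_of_ae_eq_ofReal huF, hv]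
  exact ⟨u, huF, by rw [huv, smul_inv_smul₀ hc2]⟩

lemma planeWave_re (k : ℝ) (a : ℂ) (x : ℝ) :
    (planeWave k a x).re = a.re * cos (k * x) + -a.im * sin (k * x) := by
  have h : planeWave k a x = Complex.exp ((k * x : ℝ) * Complex.I) * a := by
    simp [planeWave, mul_right_comm]
  rw [h, Complex.mul_re, Complex.exp_ofReal_mul_I_re, Complex.exp_ofReal_mul_I_im]
  ring

lemma exists_sum_cos_sin_eq_sum_image_abs (K : Finset ℝ) (α β : ℝ → ℝ) :
    ∃ α' β' : ℝ → ℝ, ∀ x : ℝ,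
      ∑ k ∈ K, (α k * cos (k * x) + β k * sin (k * x)) =
        ∑ k ∈ K.image abs, (α' k * cos (k * x) + β' k * sin (k * x)) := by
  refine ⟨fun l ↦ ∑ k ∈ K with |k| = l, α k, fun l ↦ ∑ k ∈ K with |k| = l, SignType.sign k * β k,
    fun x ↦ ?_⟩
  rw [← Finset.sum_fiberwise_of_maps_to fun k hk ↦ Finset.mem_image_of_mem abs hk]
  refine Finset.sum_congr rfl fun l _ ↦ ?_
  rw [Finset.sum_mul, Finset.sum_mul, ← Finset.sum_add_distrib]
  refine Finset.sum_congr rfl fun k hk ↦ ?_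
  obtain rfl : |k| = l := (Finset.mem_filter.1 hk).2
  rcases lt_trichotomy k 0 with h | rfl | h
  · simp [h, abs_of_neg]
  · simp
  · simp [h, abs_of_pos]

lemma exists_ae_eq_sum_cos_sin {c : ℝ} (hc : c ≠ 0) {F : ℝ → ℝ} (hmeas : AEStronglyMeasurable F)
    (hbd : ∃ B : ℝ, ∀ᵐ x, |F x| ≤ B) (hker : ∀ᵐ x, Aop (Aop F) x = c ^ 2 * F x) :
    ∃ (K : Finset ℝ) (α β : ℝ → ℝ), (∀ k ∈ K, 0 ≤ k ∧ symb k ^ 2 = c ^ 2) ∧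
      ∀ᵐ x, F x = ∑ k ∈ K, (α k * cos (k * x) + β k * sin (k * x)) := by
  obtain ⟨u, huF, hu⟩ := exists_ae_eq_ofReal_unitAverage_unitAverage_eq hc hmeas hbd hker
  obtain ⟨K, a, hK, rfl⟩ := exists_eq_sum_planeWave_of_unitAverage_unitAverage_eq hc hu
  obtain ⟨α, β, hαβ⟩ := exists_sum_cos_sin_eq_sum_image_abs K (fun k ↦ (a k).re) (fun k ↦ -(a k).im)
  refine ⟨K.image abs, α, β, Finset.forall_mem_image.2 fun k hk ↦ ⟨abs_nonneg k, ?_⟩, ?_⟩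
  · rw [symb_abs, hK k hk]
  · filter_upwards [huF] with x hx
    calc F x = ((∑ k ∈ K, planeWave k (a k)) x).re := by rw [hx, Complex.ofReal_re]
      _ = ∑ k ∈ K, ((a k).re * cos (k * x) + -(a k).im * sin (k * x)) := by
        simp only [BoundedContinuousFunction.sum_apply, Complex.re_sum, planeWave_re]
      _ = ∑ k ∈ K.image abs, (α k * cos (k * x) + β k * sin (k * x)) := hαβ x

theorem stmt2_general {c : ℝ} (hc : c ≠ 0) {F : ℝ → ℝ} (hmeas : AEStronglyMeasurable F)
    (hbd : ∃ B : ℝ, ∀ᵐ x, |F x| ≤ B) (hker : ∀ᵐ x, Aop (Aop F) x = c ^ 2 * F x) :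
    ∃ (n : ℕ) (k : Fin n → ℝ), StrictMono k ∧ (∀ i, 0 ≤ k i ∧ symb (k i) ^ 2 = c ^ 2) ∧
      ∃ α β : Fin n → ℝ, ∀ᵐ x,
        F x = ∑ i, (α i * cos (k i * x) + β i * sin (k i * x)) := by
  obtain ⟨K, α, β, hK, hF⟩ := exists_ae_eq_sum_cos_sin hc hmeas hbd hker
  let k : Fin K.card ↪o ℝ := K.orderEmbOfFin rfl
  have hsum (g : ℝ → ℝ) : ∑ i, g (k i) = ∑ l ∈ K, g l := by
    calc ∑ i, g (k i) = ∑ l ∈ Finset.univ.map k.toEmbedding, g l :=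
          (Finset.sum_map _ _ _).symm
      _ = ∑ l ∈ K, g l := by rw [K.map_orderEmbOfFin_univ rfl]
  refine ⟨K.card, k, k.strictMono, fun i ↦ hK _ (K.orderEmbOfFin_mem rfl i), α ∘ k, β ∘ k, ?_⟩
  filter_upwards [hF] with x hx
  exact hx.trans (hsum fun l ↦ α l * cos (l * x) + β l * sin (l * x)).symm

end RealKernel

/-- every bounded kernel function of `M = A² - c²` is a finite linear
combination of the harmonics `cos(k·)`, `sin(k·)` over the positive real roots `k`
of `m(k) = a(k)² - c²`. -/
theorem stmt2 (c : ℝ) (hc0 : 0 < c) (hc1 : c < 1) (F : ℝ → ℝ)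
    (hmeas : Measurable F) (hbd : ∃ B : ℝ, ∀ᵐ x ∂(volume : Measure ℝ), |F x| ≤ B)
    (hker : ∀ᵐ x ∂(volume : Measure ℝ), Aop (Aop F) x = c ^ 2 * F x) :
    ∃ (n : ℕ) (k : Fin n → ℝ), StrictMono k ∧ (∀ i, 0 < k i ∧ (symb (k i)) ^ 2 = c ^ 2) ∧
      ∃ α β : Fin n → ℝ, ∀ᵐ x ∂(volume : Measure ℝ),
        F x = ∑ i, (α i * Real.cos (k i * x) + β i * Real.sin (k i * x)) := by
  obtain ⟨n, k, hk, hroot, hF⟩ := stmt2_general hc0.ne' hmeas.aestronglyMeasurable hbd hker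
  have hc : c ^ 2 < 1 := pow_lt_one₀ hc0.le hc1 two_ne_zero
  refine ⟨n, k, hk, fun i ↦ (hroot i).imp_left (pos_of_symb_sq_lt_one · ?_), hF⟩
  exact (hroot i).2.trans_lt hc
end

section
/- Let c ∈ (0,1) and let k_c > 0 satisfy a(k_c) = c and m'(k_c) ≠ 0. Then the functions M Y₁ and M Y₂ are bounded on ℝ and satisfy (M Y₁)(x) = 0 and (M Y₂)(x) = 0 for all x with |x| > 1; that is, M Y₁ and M Y₂ are supported in the interval [−1, 1]. -/
open MeasureTheory Real Filter Topology

/-- The symbol `m(k) = a(k)² - c²`. -/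
noncomputable def msymb (c : ℝ) : ℝ → ℝ := fun k => (symb k) ^ 2 - c ^ 2

/-- `Y₁(x) = (√(2π)/m'(k_c)) cos(k_c x) sgn(x)`. -/
noncomputable def Y1 (c kc : ℝ) : ℝ → ℝ :=
  fun x => Real.sqrt (2 * Real.pi) / deriv (msymb c) kc * (Real.cos (kc * x) * Real.sign x)

/-- `Y₂(x) = (√(2π)/m'(k_c)) sin(k_c x) sgn(x)`. -/
noncomputable def Y2 (c kc : ℝ) : ℝ → ℝ :=
  fun x => Real.sqrt (2 * Real.pi) / deriv (msymb c) kc * (Real.sin (kc * x) * Real.sign x)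

/-! For `1 < |x|` the window `[x - 1, x + 1]` seen by `M` avoids the jump of `sgn` at the origin, so
there `Y₁` and `Y₂` agree with constant multiples of `cos (k_c x)` and `sin (k_c x)`. These are
eigenfunctions of `M` with eigenvalue `m(k_c) = 0`. Boundedness holds because `A` averages over an
interval of length one, so it does not increase the sup norm. -/

section Averaging

variable {F G : ℝ → ℝ} {c x K : ℝ}

lemma Aop_const_mul (r : ℝ) (F : ℝ → ℝ) : Aop (fun y => r * F y) = fun x => r * Aop F x :=
  funext fun _ => intervalIntegral.integral_const_mul r F

lemma Mop_const_mul (c r : ℝ) (F : ℝ → ℝ) (x : ℝ) :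
    Mop c (fun y => r * F y) x = r * Mop c F x := by
  simp only [Mop, Aop_const_mul]
  ring

lemma Aop_congr (h : Set.EqOn F G (Set.Icc (x - 1 / 2) (x + 1 / 2))) : Aop F x = Aop G x := by
  refine intervalIntegral.integral_congr ?_
  rwa [Set.uIcc_of_le (by linarith)]

lemma Mop_congr (h : Set.EqOn F G (Set.Icc (x - 1) (x + 1))) : Mop c F x = Mop c G x := by
  have hA : Set.EqOn (Aop F) (Aop G) (Set.Icc (x - 1 / 2) (x + 1 / 2)) := fun s hs =>
    Aop_congr (h.mono (Set.Icc_subset_Icc (by linarith [hs.1]) (by linarith [hs.2])))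
  have hx : F x = G x := h ⟨by linarith, by linarith⟩
  rw [Mop, Mop, Aop_congr hA, hx]

lemma abs_Aop_le (h : ∀ y, |F y| ≤ K) (x : ℝ) : |Aop F x| ≤ K :=
  calc |Aop F x| = ‖∫ y in (x - 1 / 2)..(x + 1 / 2), F y‖ := rfl
    _ ≤ K * |x + 1 / 2 - (x - 1 / 2)| :=
        intervalIntegral.norm_integral_le_of_norm_le_const fun y _ => h y
    _ = K := by norm_num [add_sub_sub_cancel]

lemma abs_Mop_le (c : ℝ) (h : ∀ y, |F y| ≤ K) (x : ℝ) : |Mop c F x| ≤ (1 + c ^ 2) * K :=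
  calc |Mop c F x| ≤ |Aop (Aop F) x| + |c ^ 2 * F x| := abs_sub _ _
    _ = |Aop (Aop F) x| + c ^ 2 * |F x| := by rw [abs_mul, abs_sq]
    _ ≤ K + c ^ 2 * K := by
      gcongr
      · exact abs_Aop_le (abs_Aop_le h) x
      · exact h x
    _ = (1 + c ^ 2) * K := by ring

end Averaging

section Symbol

variable (c k φ x : ℝ)

lemma Aop_cos_mul_add :
    Aop (fun y => Real.cos (k * y + φ)) x = symb k * Real.cos (k * x + φ) := by
  rcases eq_or_ne k 0 with rfl | hk
  · norm_num [Aop, symb]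
  calc Aop (fun y => Real.cos (k * y + φ)) x
      = k⁻¹ * (Real.sin (k * (x + 1 / 2) + φ) - Real.sin (k * (x - 1 / 2) + φ)) := by
        rw [Aop, intervalIntegral.integral_comp_mul_add _ hk, integral_cos, smul_eq_mul]
    _ = k⁻¹ * (2 * Real.sin (k / 2) * Real.cos (k * x + φ)) := by
        rw [Real.sin_sub_sin]
        ring_nf
    _ = symb k * Real.cos (k * x + φ) := by
        rw [symb, if_neg hk]
        field_simp

lemma Mop_cos_mul_add :
    Mop c (fun y => Real.cos (k * y + φ)) x = msymb c k * Real.cos (k * x + φ) := by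
  have hA : Aop (fun y => Real.cos (k * y + φ)) = fun y => symb k * Real.cos (k * y + φ) :=
    funext (Aop_cos_mul_add k φ)
  rw [Mop, hA, Aop_const_mul, hA, msymb]
  ring

lemma Mop_cos_mul : Mop c (fun y => Real.cos (k * y)) x = msymb c k * Real.cos (k * x) := by
  simpa only [add_zero] using Mop_cos_mul_add c k 0 x

lemma Mop_sin_mul : Mop c (fun y => Real.sin (k * y)) x = msymb c k * Real.sin (k * x) := by
  simpa only [← sub_eq_add_neg, Real.cos_sub_pi_div_two] using Mop_cos_mul_add c k (-(π / 2)) x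

end Symbol

section Sign

variable {w : ℝ → ℝ} {c x K : ℝ}

lemma abs_real_sign_le_one (x : ℝ) : |Real.sign x| ≤ 1 := by
  rcases Real.sign_apply_eq x with h | h | h <;> norm_num [h]

lemma real_sign_eq_of_abs_sub_lt {y : ℝ} (h : |y - x| < |x|) : Real.sign y = Real.sign x := by
  obtain ⟨hlo, hhi⟩ := abs_lt.1 h
  rcases le_or_gt 0 x with hx | hx
  · rw [abs_of_nonneg hx] at hlo hhi
    rw [Real.sign_of_pos (by linarith), Real.sign_of_pos (by linarith)]
  · rw [abs_of_neg hx] at hlo hhi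
    rw [Real.sign_of_neg (by linarith), Real.sign_of_neg hx]

lemma abs_Mop_mul_sign_le (c : ℝ) (h : ∀ y, |w y| ≤ K) (x : ℝ) :
    |Mop c (fun y => w y * Real.sign y) x| ≤ (1 + c ^ 2) * K := by
  refine abs_Mop_le c (fun y => ?_) x
  rw [abs_mul]
  exact (mul_le_of_le_one_right (abs_nonneg _) (abs_real_sign_le_one y)).trans (h y)

lemma Mop_mul_sign (hx : 1 < |x|) :
    Mop c (fun y => w y * Real.sign y) x = Real.sign x * Mop c w x := by
  have hsign : Set.EqOn (fun y => w y * Real.sign y) (fun y => Real.sign x * w y)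
      (Set.Icc (x - 1) (x + 1)) := by
    intro y hy
    have hdist : |y - x| ≤ 1 := abs_le.2 ⟨by linarith [hy.1], by linarith [hy.2]⟩
    simp only [real_sign_eq_of_abs_sub_lt (hdist.trans_lt hx), mul_comm]
  rw [Mop_congr hsign, Mop_const_mul]

end Sign

theorem stmt6_general {c k : ℝ} (hk : msymb c k = 0) (D : ℝ) :
    (∃ B : ℝ, ∀ x, |Mop c (fun y => D * (Real.cos (k * y) * Real.sign y)) x| ≤ B ∧
      |Mop c (fun y => D * (Real.sin (k * y) * Real.sign y)) x| ≤ B) ∧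
    (∀ x : ℝ, 1 < |x| → Mop c (fun y => D * (Real.cos (k * y) * Real.sign y)) x = 0 ∧
      Mop c (fun y => D * (Real.sin (k * y) * Real.sign y)) x = 0) := by
  simp only [Mop_const_mul, abs_mul]
  refine ⟨⟨|D| * ((1 + c ^ 2) * 1), fun x => ⟨?_, ?_⟩⟩, fun x hx => ⟨?_, ?_⟩⟩
  · gcongr
    exact abs_Mop_mul_sign_le c (fun y => Real.abs_cos_le_one (k * y)) x
  · gcongr
    exact abs_Mop_mul_sign_le c (fun y => Real.abs_sin_le_one (k * y)) x
  · rw [Mop_mul_sign hx, Mop_cos_mul, hk, zero_mul, mul_zero, mul_zero]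
  · rw [Mop_mul_sign hx, Mop_sin_mul, hk, zero_mul, mul_zero, mul_zero]

/-- `M Y₁` and `M Y₂` are bounded and supported in `[-1, 1]`. -/
theorem stmt6 (c kc : ℝ) (hc0 : 0 < c) (hc1 : c < 1) (hkc : 0 < kc)
    (ha : symb kc = c) (hm' : deriv (msymb c) kc ≠ 0) :
    (∃ B : ℝ, ∀ x, |Mop c (Y1 c kc) x| ≤ B ∧ |Mop c (Y2 c kc) x| ≤ B) ∧
    (∀ x : ℝ, 1 < |x| → Mop c (Y1 c kc) x = 0 ∧ Mop c (Y2 c kc) x = 0) :=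
  stmt6_general (by rw [msymb, ha, sub_self]) (√(2 * π) / deriv (msymb c) kc)
end

section
/- Let c ∈ (0,1), let (Ψ_δ)_{δ>0} satisfy Assumption A with constant C_Ψ and I_δ = 0 for all δ > 0, and let R₀ be an unperturbed wave. Then there exist constants C > 0 and δ* > 0, both independent of δ and S, such that for every 0 < δ < δ* and every δ-admissible S, the function G(S) satisfies: ‖G(S)‖_∞ ≤ C; G(S)(x) = 0 for all |x| > Cδ; and |∫_ℝ G(S)(x) dx| ≤ C(1 + ‖S''‖_∞) δ². -/
open MeasureTheory Real Filter Topology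

/-- Assumption A for the family `(Ψ_δ)_{δ>0}` with constant `C_Ψ`. -/
def AssumptionA (Ψ : ℝ → ℝ → ℝ) (CΨ : ℝ) : Prop :=
  0 < CΨ ∧ ∀ δ : ℝ, 0 < δ →
    Ψ δ 0 = 0 ∧ ContDiff ℝ 2 (Ψ δ) ∧
    (∀ r : ℝ, δ ≤ |r| → deriv (Ψ δ) r = Real.sign r) ∧
    (∀ r : ℝ, |deriv (Ψ δ) r| ≤ CΨ) ∧
    (∀ r : ℝ, |deriv (deriv (Ψ δ)) r| ≤ CΨ / δ)

/-- The quantity `I_δ = ½ ∫_ℝ (Ψ'_δ(r) − sgn r) dr`. -/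
noncomputable def Idelta (Ψ : ℝ → ℝ → ℝ) (δ : ℝ) : ℝ :=
  (1 / 2) * ∫ r : ℝ, (deriv (Ψ δ) r - Real.sign r)

/-- An unperturbed wave `R₀`: a `W^{2,∞}` solution of `M R₀ = A²(sgn ∘ R₀) + μ₀` with
`R₀(0) = 0` which leaves a neighbourhood of `0` monotonically and stays away from `0`. -/
def UnperturbedWave (c : ℝ) (R₀ : ℝ → ℝ) : Prop :=
  IsW2inf R₀ ∧ R₀ 0 = 0 ∧
  (∃ μ₀ : ℝ, ∀ x, Mop c R₀ x = Aop (Aop (fun y => Real.sign (R₀ y))) x + μ₀) ∧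
  ∃ x₀ r₀ d₀ : ℝ, 0 < x₀ ∧ 0 < r₀ ∧ 0 < d₀ ∧
    (∀ x, x₀ < x → r₀ < R₀ x) ∧ (∀ x, x < -x₀ → R₀ x < -r₀) ∧
    (∀ x, |x| < x₀ → d₀ < deriv R₀ x)

/-- `δ`-admissibility of a corrector `S` relative to `R₀`. -/
def Admissible (δ : ℝ) (R₀ S : ℝ → ℝ) : Prop :=
  IsW2inf S ∧ S 0 = 0 ∧
  ∃ xm xp : ℝ, xm < 0 ∧ 0 < xp ∧
    R₀ xm + S xm = -δ ∧ R₀ xp + S xp = δ ∧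
    (∀ x, x < xm → R₀ x + S x < -δ) ∧
    (∀ x, xp < x → δ < R₀ x + S x) ∧
    (∀ x, xm < x → x < xp →
      deriv R₀ 0 / 2 < deriv R₀ x + deriv S x ∧ deriv R₀ x + deriv S x < 2 * deriv R₀ 0)

/-- The nonlinear superposition operator `G(S)(x) = Ψ'_δ(R₀(x)+S(x)) − sgn(R₀(x))`. -/
noncomputable def Gop (Ψ : ℝ → ℝ → ℝ) (δ : ℝ) (R₀ S : ℝ → ℝ) : ℝ → ℝ :=
  fun x => deriv (Ψ δ) (R₀ x + S x) - Real.sign (R₀ x)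

/-! `R₀` and `R₀ + S` have the same sign everywhere, so `G(S) = g ∘ R` with `R = R₀ + S` and
`g = Ψ'_δ - sgn`. Since `g` vanishes outside `[-δ, δ]` and `R` crosses this band with slope at least
`R₀'(0) / 2`, the support of `G(S)` has length `O(δ)`. Substituting `r = R(x)` in the weighted
integral `∫ g(R(x)) R'(x) dx` gives `∫ g = 2 I_δ`, and replacing the weight `R'(x)` by the constant
`R'(0)` costs `O(δ)` pointwise, `R'` being Lipschitz, on an interval of length `O(δ)`. Hence
`∫ G(S) = 2 I_δ / R'(0) + O(δ²)`, whatever the value of `I_δ`. -/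

lemma abs_sign_le_one (r : ℝ) : |Real.sign r| ≤ 1 := by
  rcases Real.sign_apply_eq r with h | h | h <;> simp [h]

lemma measurable_real_sign : Measurable Real.sign :=
  Measurable.ite measurableSet_Iio measurable_const
    (Measurable.ite measurableSet_Ioi measurable_const measurable_const)

lemma sign_apply_eq_sign_of_strictMonoOn {f : ℝ → ℝ} {a b : ℝ} (ha : a ≤ 0) (hb : 0 ≤ b)
    (hf : StrictMonoOn f (Set.Icc a b)) (hf0 : f 0 = 0)
    (hleft : ∀ x, x < a → f x < 0) (hright : ∀ x, b < x → 0 < f x) (x : ℝ) :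
    Real.sign (f x) = Real.sign x := by
  rcases lt_trichotomy x 0 with hx | rfl | hx
  · have hfx : f x < 0 := by
      rcases lt_or_ge x a with hxa | hax
      · exact hleft x hxa
      · exact (hf ⟨hax, hx.le.trans hb⟩ ⟨ha, hb⟩ hx).trans_eq hf0
    rw [Real.sign_of_neg hfx, Real.sign_of_neg hx]
  · rw [hf0]
  · have hfx : 0 < f x := by
      rcases lt_or_ge b x with hbx | hxb
      · exact hright x hbx
      · exact hf0.symm.trans_lt (hf ⟨ha, hb⟩ ⟨ha.trans hx.le, hxb⟩ hx)
    rw [Real.sign_of_pos hfx, Real.sign_of_pos hx]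

lemma abs_mul_setIntegral_comp_sub_setIntegral_le {f g : ℝ → ℝ} {a b q B L : ℝ} (hab : a ≤ b)
    (hf : Differentiable ℝ f) (hf' : ∀ x ∈ Set.Ioo a b, 0 ≤ deriv f x)
    (hL : ∀ x ∈ Set.Icc a b, |q - deriv f x| ≤ L) (hg : Measurable g) (hB : ∀ y, |g y| ≤ B) :
    |q * (∫ x in Set.Icc a b, g (f x)) - ∫ y in Set.Icc (f a) (f b), g y| ≤ B * L * (b - a) := by
  have hgf : Measurable fun x => g (f x) := hg.comp hf.continuous.measurable
  have hbound : ∀ x ∈ Set.Icc a b, ‖(q - deriv f x) * g (f x)‖ ≤ B * L := fun x hx => by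
    rw [Real.norm_eq_abs, abs_mul, mul_comm B L]
    exact mul_le_mul (hL x hx) (hB _) (abs_nonneg _) ((abs_nonneg _).trans (hL x hx))
  have hint : IntegrableOn (fun x => g (f x)) (Set.Icc a b) :=
    Measure.integrableOn_of_bounded measure_Icc_lt_top.ne hgf.aestronglyMeasurable
      (Eventually.of_forall fun x => hB (f x))
  have hint' : IntegrableOn (fun x => (q - deriv f x) * g (f x)) (Set.Icc a b) :=
    Measure.integrableOn_of_bounded measure_Icc_lt_top.ne
      (((measurable_deriv f).const_sub q).mul hgf).aestronglyMeasurable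
      ((ae_restrict_iff' measurableSet_Icc).2 (Eventually.of_forall hbound))
  have hsubst : ∫ y in Set.Icc (f a) (f b), g y =
      q * (∫ x in Set.Icc a b, g (f x)) - ∫ x in Set.Icc a b, (q - deriv f x) * g (f x) :=
    calc ∫ y in Set.Icc (f a) (f b), g y
        = ∫ x in Set.Icc a b, deriv f x • g (f x) :=
          (integral_Icc_deriv_smul_of_deriv_nonneg hf.continuous.continuousOn
            (fun x _ => (hf x).hasDerivAt) hf' hab).symm
      _ = ∫ x in Set.Icc a b, (q * g (f x) - (q - deriv f x) * g (f x)) := by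
          congr 1 with x
          rw [smul_eq_mul]
          ring
      _ = _ := by rw [integral_sub (hint.const_mul q) hint', integral_const_mul]
  rw [hsubst, sub_sub_cancel, ← Real.volume_real_Icc_of_le hab, ← Real.norm_eq_abs]
  exact norm_setIntegral_le_of_norm_le_const measure_Icc_lt_top hbound

/-- The differentiable function `R` crosses the band `[-δ, δ]` exactly on the interval
`[a, b] ∋ 0`, with slope at least `m > 0` there. The model case is
`R = R₀ + S` with `m = R₀'(0) / 2`. -/
structure IsCrossing (R : ℝ → ℝ) (δ m a b : ℝ) : Prop where
  differentiable : Differentiable ℝ R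
  map_zero : R 0 = 0
  left_neg : a < 0
  right_pos : 0 < b
  map_left : R a = -δ
  map_right : R b = δ
  map_lt_of_lt_left : ∀ x, x < a → R x < -δ
  lt_map_of_right_lt : ∀ x, b < x → δ < R x
  slope_pos : 0 < m
  slope_le_deriv : ∀ x ∈ Set.Ioo a b, m ≤ deriv R x

namespace IsCrossing

variable {R g : ℝ → ℝ} {δ m a b : ℝ}

lemma deriv_pos (h : IsCrossing R δ m a b) {x : ℝ} (hx : x ∈ Set.Ioo a b) : 0 < deriv R x :=
  h.slope_pos.trans_le (h.slope_le_deriv x hx)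

lemma slope_mul_sub_le (h : IsCrossing R δ m a b) {x y : ℝ} (hax : a ≤ x) (hxy : x ≤ y)
    (hyb : y ≤ b) : m * (y - x) ≤ R y - R x :=
  (convex_Icc a b).mul_sub_le_image_sub_of_le_deriv h.differentiable.continuous.continuousOn
    h.differentiable.differentiableOn (by simpa only [interior_Icc] using h.slope_le_deriv)
    x ⟨hax, hxy.trans hyb⟩ y ⟨hax.trans hxy, hyb⟩ hxy

lemma right_le (h : IsCrossing R δ m a b) : b ≤ δ / m := by
  have := h.slope_mul_sub_le h.left_neg.le h.right_pos.le le_rfl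
  rw [h.map_right, h.map_zero] at this
  rw [le_div_iff₀ h.slope_pos]
  linarith

lemma neg_left_le (h : IsCrossing R δ m a b) : -a ≤ δ / m := by
  have := h.slope_mul_sub_le le_rfl h.left_neg.le h.right_pos.le
  rw [h.map_left, h.map_zero] at this
  rw [le_div_iff₀ h.slope_pos]
  linarith

lemma width_pos (h : IsCrossing R δ m a b) : 0 < δ :=
  (div_pos_iff_of_pos_right h.slope_pos).1 (h.right_pos.trans_le h.right_le)

lemma sign_apply (h : IsCrossing R δ m a b) (x : ℝ) : Real.sign (R x) = Real.sign x :=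
  sign_apply_eq_sign_of_strictMonoOn h.left_neg.le h.right_pos.le
    (strictMonoOn_of_deriv_pos (convex_Icc a b) h.differentiable.continuous.continuousOn
      fun x hx => h.deriv_pos (by simpa only [interior_Icc] using hx))
    h.map_zero
    (fun x hx => (h.map_lt_of_lt_left x hx).trans (neg_neg_of_pos h.width_pos))
    (fun x hx => h.width_pos.trans (h.lt_map_of_right_lt x hx)) x

lemma le_abs_of_notMem (h : IsCrossing R δ m a b) {x : ℝ} (hx : x ∉ Set.Icc a b) :
    δ ≤ |R x| := by
  rcases not_and_or.1 hx with hxa | hxb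
  · exact le_abs'.2 (.inl (h.map_lt_of_lt_left x (not_le.1 hxa)).le)
  · exact le_abs'.2 (.inr (h.lt_map_of_right_lt x (not_le.1 hxb)).le)

lemma abs_le_of_mem (h : IsCrossing R δ m a b) {x : ℝ} (hx : x ∈ Set.Icc a b) : |x| ≤ δ / m :=
  abs_le.2 ⟨by linarith [h.neg_left_le, hx.1], hx.2.trans h.right_le⟩

lemma abs_deriv_zero_mul_integral_comp_sub_integral_le (h : IsCrossing R δ m a b) {B : ℝ}
    {K : NNReal} (hK : LipschitzWith K (deriv R)) (hg : Measurable g) (hB : ∀ r, |g r| ≤ B)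
    (hsupp : ∀ r, δ ≤ |r| → g r = 0) :
    |deriv R 0 * (∫ x, g (R x)) - ∫ r, g r| ≤ B * (K * (δ / m)) * (2 * (δ / m)) := by
  have hB0 : 0 ≤ B := (abs_nonneg _).trans (hB 0)
  have hδm : 0 < δ / m := div_pos h.width_pos h.slope_pos
  have hL : ∀ x ∈ Set.Icc a b, |deriv R 0 - deriv R x| ≤ K * (δ / m) := fun x hx =>
    calc |deriv R 0 - deriv R x| ≤ K * |x| := by
          simpa only [Real.dist_eq, zero_sub, abs_neg] using hK.dist_le_mul 0 x
      _ ≤ K * (δ / m) := by gcongr; exact h.abs_le_of_mem hx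
  have hcomp : ∫ x in Set.Icc a b, g (R x) = ∫ x, g (R x) :=
    setIntegral_eq_integral_of_forall_compl_eq_zero fun x hx => hsupp _ (h.le_abs_of_notMem hx)
  have hband : ∫ r in Set.Icc (R a) (R b), g r = ∫ r, g r := by
    rw [h.map_left, h.map_right]
    exact setIntegral_eq_integral_of_forall_compl_eq_zero fun r hr =>
      hsupp r (not_le.1 fun hrδ => hr (abs_le.1 hrδ)).le
  rw [← hcomp, ← hband]
  calc _ ≤ B * (K * (δ / m)) * (b - a) :=
        abs_mul_setIntegral_comp_sub_setIntegral_le (h.left_neg.trans h.right_pos).le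
          h.differentiable (fun x hx => (h.deriv_pos hx).le) hL hg hB
    _ ≤ B * (K * (δ / m)) * (2 * (δ / m)) := by
        gcongr
        linarith [h.neg_left_le, h.right_le]

lemma abs_integral_comp_sub_div_le (h : IsCrossing R δ m a b) {B : ℝ} {K : NNReal}
    (hK : LipschitzWith K (deriv R)) (hg : Measurable g) (hB : ∀ r, |g r| ≤ B)
    (hsupp : ∀ r, δ ≤ |r| → g r = 0) :
    |(∫ x, g (R x)) - (∫ r, g r) / deriv R 0| ≤ 2 * B * K / m ^ 3 * δ ^ 2 := by
  have hm := h.slope_pos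
  have h0 : (0 : ℝ) ∈ Set.Ioo a b := ⟨h.left_neg, h.right_pos⟩
  have hq : 0 < deriv R 0 := h.deriv_pos h0
  have hmul : m * |(∫ x, g (R x)) - (∫ r, g r) / deriv R 0| ≤
      B * (K * (δ / m)) * (2 * (δ / m)) :=
    calc m * |(∫ x, g (R x)) - (∫ r, g r) / deriv R 0|
        ≤ deriv R 0 * |(∫ x, g (R x)) - (∫ r, g r) / deriv R 0| := by
          gcongr
          exact h.slope_le_deriv 0 h0
      _ = |deriv R 0 * (∫ x, g (R x)) - ∫ r, g r| := by
          rw [← abs_of_pos hq, ← abs_mul, abs_of_pos hq, mul_sub, mul_div_cancel₀ _ hq.ne']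
      _ ≤ _ := h.abs_deriv_zero_mul_integral_comp_sub_integral_le hK hg hB hsupp
  calc _ ≤ B * (K * (δ / m)) * (2 * (δ / m)) / m := (le_div_iff₀' hm).2 hmul
    _ = 2 * B * K / m ^ 3 * δ ^ 2 := by field_simp

end IsCrossing

/-- A measurable function that agrees with `sgn` outside `(-δ, δ)` and is bounded by `B`, such
as `Ψ'_δ`. -/
structure IsRegularizedSign (δ B : ℝ) (ψ : ℝ → ℝ) : Prop where
  measurable : Measurable ψ
  eq_sign : ∀ r, δ ≤ |r| → ψ r = Real.sign r
  abs_le : ∀ r, |ψ r| ≤ B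

namespace IsRegularizedSign

variable {ψ : ℝ → ℝ} {δ B : ℝ}

lemma measurable_sub_sign (h : IsRegularizedSign δ B ψ) :
    Measurable fun r => ψ r - Real.sign r :=
  h.measurable.sub measurable_real_sign

lemma abs_sub_sign_le (h : IsRegularizedSign δ B ψ) (r : ℝ) : |ψ r - Real.sign r| ≤ B + 1 :=
  (abs_sub _ _).trans (add_le_add (h.abs_le r) (abs_sign_le_one r))

lemma sub_sign_eq_zero (h : IsRegularizedSign δ B ψ) (r : ℝ) (hr : δ ≤ |r|) :
    ψ r - Real.sign r = 0 :=
  sub_eq_zero.2 (h.eq_sign r hr)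

end IsRegularizedSign

lemma AssumptionA.isRegularizedSign {Ψ : ℝ → ℝ → ℝ} {CΨ δ : ℝ} (h : AssumptionA Ψ CΨ)
    (hδ : 0 < δ) : IsRegularizedSign δ CΨ (deriv (Ψ δ)) :=
  have ⟨_, _, hsign, hbound, _⟩ := h.2 δ hδ
  ⟨measurable_deriv _, hsign, hbound⟩

lemma Admissible.exists_isCrossing {δ : ℝ} {R₀ S : ℝ → ℝ} (hS : Admissible δ R₀ S)
    (hd : Differentiable ℝ R₀) (h0 : R₀ 0 = 0) :
    ∃ a b, IsCrossing (fun x => R₀ x + S x) δ (deriv R₀ 0 / 2) a b := by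
  obtain ⟨⟨hSd, -⟩, hS0, a, b, ha, hb, hRa, hRb, hlt, hgt, hslope⟩ := hS
  have hD : 0 < deriv R₀ 0 := by
    obtain ⟨hlow, hupp⟩ := hslope 0 ha hb
    linarith
  exact ⟨a, b, hd.add hSd, by simp only [h0, hS0, add_zero], ha, hb, hRa, hRb, hlt, hgt,
    half_pos hD, fun x hx => by
      rw [deriv_fun_add (hd x) (hSd x)]
      exact (hslope x hx.1 hx.2).1.le⟩

namespace UnperturbedWave

variable {c : ℝ} {R₀ : ℝ → ℝ}

lemma deriv_zero_pos (h : UnperturbedWave c R₀) : 0 < deriv R₀ 0 := by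
  obtain ⟨-, -, -, x₀, r₀, d₀, hx₀, -, hd₀, -, -, hslope⟩ := h
  exact hd₀.trans (hslope 0 (by rwa [abs_zero]))

lemma sign_apply (h : UnperturbedWave c R₀) (x : ℝ) : Real.sign (R₀ x) = Real.sign x := by
  obtain ⟨⟨hd, -⟩, h0, -, x₀, r₀, d₀, hx₀, hr₀, hd₀, hright, hleft, hslope⟩ := h
  have hmono : StrictMonoOn R₀ (Set.Icc (-x₀) x₀) :=
    strictMonoOn_of_deriv_pos (convex_Icc _ _) hd.continuous.continuousOn fun y hy =>
      hd₀.trans (hslope y (abs_lt.2 (by rwa [interior_Icc] at hy)))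
  exact sign_apply_eq_sign_of_strictMonoOn (neg_nonpos.2 hx₀.le) hx₀.le hmono h0
    (fun y hy => (hleft y hy).trans (neg_neg_of_pos hr₀)) (fun y hy => hr₀.trans (hright y hy)) x

end UnperturbedWave

theorem stmt9_general {R₀ : ℝ → ℝ} {K₀ : NNReal} {B : ℝ} (hd : Differentiable ℝ R₀)
    (hK₀ : LipschitzWith K₀ (deriv R₀)) (hsign : ∀ x, Real.sign (R₀ x) = Real.sign x)
    (hD : 0 < deriv R₀ 0) (hB : 0 ≤ B) :
    ∃ C : ℝ, 0 < C ∧ ∀ (δ : ℝ) (ψ S : ℝ → ℝ), IsRegularizedSign δ B ψ → Admissible δ R₀ S →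
      (∀ x, |ψ (R₀ x + S x) - Real.sign (R₀ x)| ≤ C) ∧
      (∀ x, C * δ < |x| → ψ (R₀ x + S x) - Real.sign (R₀ x) = 0) ∧
      (∀ K : NNReal, LipschitzWith K (deriv S) →
        |(∫ x, (ψ (R₀ x + S x) - Real.sign (R₀ x))) -
          (∫ r, (ψ r - Real.sign r)) / (deriv R₀ 0 + deriv S 0)| ≤
            C * (1 + (K : ℝ)) * δ ^ 2) := by
  have h0 : R₀ 0 = 0 := Real.sign_eq_zero_iff.1 ((hsign 0).trans Real.sign_zero)
  set D := deriv R₀ 0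
  set E := 2 * (B + 1) * (K₀ + 1) / (D / 2) ^ 3
  have hE : 0 ≤ E := by positivity
  have hslope : 0 < 1 / (D / 2) := by positivity
  refine ⟨B + 1 + 1 / (D / 2) + E, by positivity, fun δ ψ S hψ hS => ?_⟩
  obtain ⟨a, b, hR⟩ := hS.exists_isCrossing hd h0
  have hG : ∀ x, ψ (R₀ x + S x) - Real.sign (R₀ x) =
      ψ (R₀ x + S x) - Real.sign (R₀ x + S x) := fun x => by rw [hsign, hR.sign_apply x]
  simp only [hG]
  refine ⟨fun x => (hψ.abs_sub_sign_le _).trans (by linarith), fun x hx => ?_, fun K hK => ?_⟩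
  · have hδ := hR.width_pos
    refine hψ.sub_sign_eq_zero _ (hR.le_abs_of_notMem fun hmem => hx.not_ge ?_)
    calc |x| ≤ δ / (D / 2) := hR.abs_le_of_mem hmem
      _ = 1 / (D / 2) * δ := by ring
      _ ≤ _ := by gcongr; linarith
  · have hderiv : deriv (fun x => R₀ x + S x) = fun x => deriv R₀ x + deriv S x :=
      funext fun x => deriv_fun_add (hd x) (hS.1.1 x)
    have hmain := hR.abs_integral_comp_sub_div_le (hderiv ▸ hK₀.add hK) hψ.measurable_sub_sign
      hψ.abs_sub_sign_le hψ.sub_sign_eq_zero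
    rw [hderiv] at hmain
    have hKK : (K₀ + K : ℝ) ≤ (K₀ + 1) * (1 + K) := by
      nlinarith [mul_nonneg K₀.coe_nonneg K.coe_nonneg]
    calc _ ≤ 2 * (B + 1) * (K₀ + K : ℝ) / (D / 2) ^ 3 * δ ^ 2 := hmain
      _ ≤ 2 * (B + 1) * ((K₀ + 1) * (1 + K)) / (D / 2) ^ 3 * δ ^ 2 := by gcongr
      _ = E * (1 + K) * δ ^ 2 := by ring
      _ ≤ _ := by gcongr; linarith

/-- bounds on `G(S)` for `δ`-admissible `S`: `‖G(S)‖_∞ ≤ C`, `G(S)` is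
supported in `[-Cδ, Cδ]`, and `|∫ G(S)| ≤ C(1 + ‖S''‖_∞) δ²`. -/
theorem stmt9 (c : ℝ) (hc0 : 0 < c) (hc1 : c < 1)
    (Ψ : ℝ → ℝ → ℝ) (CΨ : ℝ) (hA : AssumptionA Ψ CΨ)
    (hI : ∀ δ : ℝ, 0 < δ → Idelta Ψ δ = 0)
    (R₀ : ℝ → ℝ) (hR₀ : UnperturbedWave c R₀) :
    ∃ C δs : ℝ, 0 < C ∧ 0 < δs ∧
      ∀ δ : ℝ, 0 < δ → δ < δs → ∀ S : ℝ → ℝ, Admissible δ R₀ S →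
        (∀ x, |Gop Ψ δ R₀ S x| ≤ C) ∧
        (∀ x : ℝ, C * δ < |x| → Gop Ψ δ R₀ S x = 0) ∧
        (∀ K : NNReal, LipschitzWith K (deriv S) →
          |∫ x : ℝ, Gop Ψ δ R₀ S x| ≤ C * (1 + (K : ℝ)) * δ ^ 2) := by
  have ⟨hd, _, K₀, hK₀⟩ := hR₀.1
  obtain ⟨C, hC, h⟩ := stmt9_general hd hK₀ hR₀.sign_apply hR₀.deriv_zero_pos hA.1.le
  refine ⟨C, 1, hC, one_pos, fun δ hδ _ S hS => ?_⟩
  have hI₀ : ∫ r, (deriv (Ψ δ) r - Real.sign r) = 0 := by simpa [Idelta] using hI δ hδ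
  simpa only [hI₀, zero_div, sub_zero] using! h δ _ S (hA.isRegularizedSign hδ) hS
end
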